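/- Assume the SOSC holds with respect to J. Fix a > 1, ε₀ > 0, and set b := max(2a, diam(J)/ε₀). Then for ν-almost every w ∈ W, writing x = π(w), the limit lim_{δ→0⁺} (1/ln(1/δ)) ∫_δ^{d(x,ℝ^d∖J)/b} ε^{−(d−1)} H^{d−1}(∂F(ε) ∩ B(x,aε)) ε^{−1} dε exists, is finite, is independent of w, and equals (∑_{j=1}^N r_j^D ln(1/r_j))^{−1} · ∫_W ∫_{d(π(v),ℝ^d∖S_{v₁}(J))/b}^{d(π(v),ℝ^d∖J)/b} ε^{−(d−1)} H^{d−1}(∂F(ε) ∩ B(π(v),aε)) ε^{−1} dε dν(v), where ∂F(ε) denotes the topological boundary of the parallel set F(ε) and H^{d−1} is (d−1)-dimensional Hausdorff measure. -/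

import Mathlib

open MeasureTheory Metric Filter Set
open scoped ENNReal Topology NNReal

lemma hm_open_cover {E : Type*} [MetricSpace E] (s : ℝ) (hs : 0 ≤ s) (t : ℕ → Set E)
    (c r : ℝ≥0∞) (hr : r ≠ ⊤) (ht : ∀ n, ediam (t n) < r)
    (hc : ∑' n, ⨆ _ : (t n).Nonempty, ediam (t n) ^ s < c) :
    ∃ t' : ℕ → Set E, (∀ n, IsOpen (t' n)) ∧ (∀ n, t n ⊆ t' n) ∧ (∀ n, ediam (t' n) ≤ r) ∧
      ∑' n, ⨆ _ : (t' n).Nonempty, ediam (t' n) ^ s < c := by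
  obtain ⟨η, hη, hηs⟩ := ENNReal.exists_pos_sum_of_countable' (ι := ℕ) (ε := c - ∑' n, ⨆ _ : (t n).Nonempty, ediam (t n) ^ s) (by
    exact (tsub_pos_of_lt hc).ne')
  have key : ∀ n, ∃ δ : ℝ≥0, 0 < δ ∧ ediam (t n) + 2 * (δ : ℝ≥0∞) ≤ r ∧
      (ediam (t n) + 2 * (δ : ℝ≥0∞)) ^ s ≤ ediam (t n) ^ s + η n := by
    intro n
    have hD : ediam (t n) ≠ ⊤ := ((ht n).trans_le le_top).ne
    have h1 : Tendsto (fun δ : ℝ≥0 => ediam (t n) + 2 * (δ : ℝ≥0∞)) (𝓝 0) (𝓝 (ediam (t n))) := by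
      have : Continuous (fun δ : ℝ≥0 => ediam (t n) + 2 * (δ : ℝ≥0∞)) := by
        have : Continuous (fun δ : ℝ≥0 => ((2 * δ : ℝ≥0) : ℝ≥0∞)) := by
          apply ENNReal.continuous_coe.comp; fun_prop
        simp only [ENNReal.coe_mul] at this
        exact continuous_const.add this
      simpa using this.tendsto 0
    have h2 := (ENNReal.continuous_rpow_const (y := s)).continuousAt.tendsto.comp h1
    have hlt : ediam (t n) ^ s < ediam (t n) ^ s + η n :=
      ENNReal.lt_add_right (ENNReal.rpow_ne_top_of_nonneg hs hD) (hη n).ne'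
    have e1 := h1.eventually (gt_mem_nhds (ht n))
    have e2 := h2.eventually (gt_mem_nhds hlt)
    have e : ∀ᶠ δ : ℝ≥0 in 𝓝[>] 0, ediam (t n) + 2 * (δ : ℝ≥0∞) ≤ r ∧
      (ediam (t n) + 2 * (δ : ℝ≥0∞)) ^ s ≤ ediam (t n) ^ s + η n := by
      filter_upwards [nhdsWithin_le_nhds e1, nhdsWithin_le_nhds e2] with δ a b
      exact ⟨a.le, b.le⟩
    obtain ⟨δ, hδ, h0⟩ := (e.and self_mem_nhdsWithin).exists
    exact ⟨δ, h0, hδ⟩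
  choose δ hδ0 hδ1 hδ2 using key
  refine ⟨fun n => thickening (δ n) (t n), fun n => isOpen_thickening, fun n => self_subset_thickening (by exact_mod_cast hδ0 n) _,
    fun n => (ediam_thickening_le _).trans (hδ1 n), ?_⟩
  calc _ ≤ ∑' n, ((⨆ _ : (t n).Nonempty, ediam (t n) ^ s) + η n) := by
        refine ENNReal.tsum_le_tsum fun n => iSup_le fun hne => ?_
        have hne' : (t n).Nonempty := by
          by_contra h
          rw [not_nonempty_iff_eq_empty] at h
          simp [h] at hne
        simp only [hne', ciSup_pos]
        refine le_trans ?_ (hδ2 n)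
        gcongr
        exact ediam_thickening_le _
    _ = (∑' n, (⨆ _ : (t n).Nonempty, ediam (t n) ^ s)) + ∑' n, η n := ENNReal.tsum_add
    _ < c := by
        have := lt_tsub_iff_left.1 hηs
        exact this

lemma hm_slice_measurable_cpt {P E : Type*} [TopologicalSpace P] [MeasurableSpace P] [OpensMeasurableSpace P]
    [MetricSpace E] [MeasurableSpace E] [BorelSpace E] (s : ℝ) (hs : 0 ≤ s)
    (C : Set (P × E)) (hC : IsClosed C) (K : Set E) (hK : IsCompact K) :
    Measurable fun p => μH[s] {y | y ∈ K ∧ (p, y) ∈ C} := by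
  refine measurable_of_Iic fun c => ?_
  rcases eq_or_ne c ⊤ with rfl | hc
  · simp
  let ρ : ℕ → ℝ≥0∞ := fun n => ((n : ℝ≥0∞) + 1)⁻¹
  have hρ0 : ∀ n, 0 < ρ n := fun n => by
    simp [ρ]
  have hρt : ∀ n, ρ n ≠ ⊤ := fun n => by simp [ρ]
  have hρlim : Tendsto ρ atTop (𝓝 0) := by
    have := (tendsto_add_atTop_iff_nat (f := fun n : ℕ => (n : ℝ≥0∞)⁻¹) 1).2 ENNReal.tendsto_inv_nat_nhds_zero
    simpa [ρ] using this
  let V : ℕ → Set P := fun n => {p | ∃ t : ℕ → Set E, (∀ k, IsOpen (t k)) ∧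
    {y | y ∈ K ∧ (p, y) ∈ C} ⊆ ⋃ k, t k ∧ (∀ k, ediam (t k) ≤ ρ n) ∧
      ∑' k, ⨆ _ : (t k).Nonempty, ediam (t k) ^ s < c + ρ n}
  have hV : ∀ n, IsOpen (V n) := by
    intro n
    rw [isOpen_iff_mem_nhds]
    rintro p ⟨t, hto, htc, htd, hts⟩
    have : ∀ᶠ q in 𝓝 p, ∀ y ∈ K, ((q, y) ∈ C → y ∈ ⋃ k, t k) := by
      refine hK.eventually_forall_of_forall_eventually fun y hy => ?_
      by_cases hyt : y ∈ ⋃ k, t k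
      · have : ∀ᶠ z : P × E in 𝓝 (p, y), z.2 ∈ ⋃ k, t k :=
          continuous_snd.continuousAt.eventually ((isOpen_iUnion hto).mem_nhds hyt)
        filter_upwards [this] with z hz _ using hz
      · have hn : (p, y) ∉ C := fun h => hyt (htc ⟨hy, h⟩)
        filter_upwards [hC.isOpen_compl.mem_nhds hn] with z hz h
        exact absurd h hz
    filter_upwards [this] with q hq
    exact ⟨t, hto, fun y hy => hq y hy.1 hy.2, htd, hts⟩
  have : (fun p => μH[s] {y | y ∈ K ∧ (p, y) ∈ C}) ⁻¹' Iic c = ⋂ n, V n := by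
    ext p
    simp only [mem_preimage, mem_Iic, mem_iInter]
    constructor
    · intro h n
      rw [Measure.hausdorffMeasure_apply] at h
      have h2 : (ρ n) / 2 < ρ n := ENNReal.half_lt_self (hρ0 n).ne' (hρt n)
      have h1 := (le_iSup₂ (f := fun (r : ℝ≥0∞) (_ : 0 < r) =>
        ⨅ (t : ℕ → Set E) (_ : {y | y ∈ K ∧ (p, y) ∈ C} ⊆ ⋃ n, t n) (_ : ∀ n, ediam (t n) ≤ r),
          ∑' n, ⨆ _ : (t n).Nonempty, ediam (t n) ^ s) (ρ n / 2) (ENNReal.half_pos (hρ0 n).ne')).trans h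
      have h3 := h1.trans_lt (ENNReal.lt_add_right hc (hρ0 n).ne')
      simp only [iInf_lt_iff] at h3
      obtain ⟨t, ht1, ht2, ht3⟩ := h3
      obtain ⟨t', a1, a2, a3, a4⟩ := hm_open_cover s hs t _ (ρ n) (hρt n) (fun k => (ht2 k).trans_lt h2) ht3
      exact ⟨t', a1, ht1.trans (iUnion_mono a2), a3, a4⟩
    · intro h
      rw [Measure.hausdorffMeasure_apply]
      refine iSup₂_le fun r hr => ?_
      refine ge_of_tendsto (x := atTop) (f := fun n => c + ρ n) (by simpa using hρlim.const_add c) ?_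
      filter_upwards [hρlim.eventually (gt_mem_nhds hr)] with n hn
      obtain ⟨t, hto, htc, htd, hts⟩ := h n
      exact (iInf₂_le_of_le t htc (iInf_le_of_le (fun k => (htd k).trans hn.le) le_rfl)).trans hts.le
  rw [this]
  exact MeasurableSet.iInter fun n => (hV n).measurableSet

lemma hm_slice_measurable {P E : Type*} [TopologicalSpace P] [MeasurableSpace P] [OpensMeasurableSpace P]
    [MetricSpace E] [ProperSpace E] [Inhabited E] [MeasurableSpace E] [BorelSpace E] (s : ℝ) (hs : 0 ≤ s)
    (C : Set (P × E)) (hC : IsClosed C) :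
    Measurable fun p => μH[s] {y | (p, y) ∈ C} := by
  have : (fun p => μH[s] {y | (p, y) ∈ C}) =
      fun p => ⨆ n : ℕ, μH[s] {y | y ∈ closedBall (default : E) n ∧ (p, y) ∈ C} := by
    ext p
    rw [← Monotone.measure_iUnion]
    · congr 1
      ext y
      simp only [mem_setOf_eq, mem_iUnion]
      constructor
      · intro h
        obtain ⟨n, hn⟩ := exists_nat_ge (dist y default)
        exact ⟨n, by simpa using hn, h⟩
      · rintro ⟨n, _, h⟩; exact h
    · intro n m hnm y hy
      exact ⟨closedBall_subset_closedBall (by exact_mod_cast hnm) hy.1, hy.2⟩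
  rw [this]
  exact Measurable.iSup fun n => hm_slice_measurable_cpt s hs C hC _ (isCompact_closedBall _ _)


lemma proj_exists (n : ℕ) (u : EuclideanSpace ℝ (Fin (n+1))) (hu : ‖u‖ = 1) :
    ∃ Q : EuclideanSpace ℝ (Fin (n+1)) → (Fin n → ℝ), LipschitzWith 1 Q ∧
      ∀ y z, |inner ℝ u (y - z)| ≤ ‖y - z‖ / 4 →
        dist y z ≤ (2 * ((Fintype.card (Fin n) : ℝ≥0) ^ (1 / (2 : ℝ≥0∞)).toReal) : ℝ≥0) * dist (Q y) (Q z) := by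
  have : Fact (Module.finrank ℝ (EuclideanSpace ℝ (Fin (n+1))) = n + 1) := ⟨by simp⟩
  have hu0 : u ≠ 0 := by rintro rfl; simp at hu
  let B := (OrthonormalBasis.fromOrthogonalSpanSingleton (𝕜 := ℝ) n hu0).repr
  let K : Submodule ℝ (EuclideanSpace ℝ (Fin (n+1))) := Submodule.span ℝ {u}
  let Q0 : EuclideanSpace ℝ (Fin (n+1)) → EuclideanSpace ℝ (Fin n) := fun y => B (Kᗮ.orthogonalProjectionOnto y)
  have hQ0 : ∀ y z, dist (Q0 y) (Q0 z) = ‖Kᗮ.orthogonalProjectionOnto (y - z)‖ := by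
    intro y z
    simp only [Q0]
    rw [B.dist_map, dist_eq_norm, map_sub]
  refine ⟨fun y => (Q0 y).ofLp, ?_, ?_⟩
  · have h1 : LipschitzWith 1 Q0 := LipschitzWith.of_dist_le_mul fun y z => by
      rw [hQ0, dist_eq_norm]
      simpa using Kᗮ.norm_orthogonalProjectionOnto_apply_le (y - z)
    have h2 := (PiLp.lipschitzWith_ofLp 2 (fun _ : Fin n => ℝ)).comp h1
    rw [one_mul] at h2
    exact h2
  · intro y z hyz
    have h2 := (PiLp.antilipschitzWith_ofLp 2 (fun _ : Fin n => ℝ)).le_mul_dist (Q0 y) (Q0 z)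
    have h3 : ‖y - z‖ ^ 2 = ‖K.orthogonalProjectionOnto (y-z)‖ ^ 2 + ‖Kᗮ.orthogonalProjectionOnto (y-z)‖ ^ 2 :=
      Submodule.norm_sq_eq_add_norm_sq_projection _ _
    have h4 : ‖K.orthogonalProjectionOnto (y-z)‖ = |inner ℝ u (y - z)| := by
      rw [← Submodule.norm_coe, ← Submodule.starProjection_apply, Submodule.starProjection_unit_singleton ℝ hu, norm_smul, hu]
      simp
    rw [h4, ← hQ0 y z] at h3
    have h5 : dist y z ≤ 2 * dist (Q0 y) (Q0 z) := by
      rw [dist_eq_norm]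
      have := abs_nonneg (inner ℝ u (y - z))
      have h6 : |inner ℝ u (y - z)| ^ 2 ≤ (‖y - z‖/4)^2 := by gcongr
      have := norm_nonneg (y - z)
      have h7 : (0:ℝ) ≤ dist (Q0 y) (Q0 z) := dist_nonneg
      by_contra hcon
      push Not at hcon
      nlinarith
    refine h5.trans ?_
    push_cast
    push_cast at h2
    rw [mul_assoc]
    gcongr

lemma piece_bound (n : ℕ) : ∃ C : ℝ≥0∞, C ≠ ⊤ ∧ ∀ (M : Set (EuclideanSpace ℝ (Fin (n+1)))) (p0 y0 : EuclideanSpace ℝ (Fin (n+1))),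
    (∀ y ∈ M, dist y y0 ≤ 1/20 ∧ ∃ p, dist p p0 ≤ 1/20 ∧ dist y p = 1 ∧ ∀ z ∈ M, 1 ≤ dist z p) →
    μH[(n:ℝ)] M ≤ C := by
  let L : ℝ≥0 := 2 * ((Fintype.card (Fin n) : ℝ≥0) ^ (1 / (2 : ℝ≥0∞)).toReal)
  refine ⟨(L : ℝ≥0∞) ^ (n:ℝ) * ENNReal.ofReal ((2 * 1) ^ n), ?_, ?_⟩
  · exact ENNReal.mul_ne_top (ENNReal.rpow_ne_top_of_nonneg (by positivity) (by simp)) (by simp)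
  intro M p0 y0 hM
  rcases M.eq_empty_or_nonempty with rfl | ⟨y1, hy1⟩
  · simp
  obtain ⟨hy1a, p1, hp1a, hp1b, hp1c⟩ := hM y1 hy1
  have hu : ‖y1 - p1‖ = 1 := by rw [← dist_eq_norm]; exact hp1b
  obtain ⟨Q, hQ, hQ2⟩ := proj_exists n (y1 - p1) hu
  have half : ∀ y ∈ M, ∀ z ∈ M, -(‖y - z‖ / 4) ≤ inner ℝ (y1 - p1) (y - z) := by
    intro y hy z hz
    obtain ⟨hza, p, hpa, hpb, hpc⟩ := hM z hz
    have h1 := hpc y hy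
    have hya := (hM y hy).1
    rw [dist_eq_norm] at h1 hpb
    have e1 : ‖y - p‖^2 = ‖y - z‖^2 + 2 * inner ℝ (y - z) (z - p) + ‖z - p‖^2 := by
      rw [← norm_add_sq_real]; congr 2; abel
    have hyz : ‖y - z‖ ≤ 1/10 := by
      rw [← dist_eq_norm]; linarith [dist_triangle_right y z y0]
    have e2 : - (‖y - z‖ / 20) ≤ inner ℝ (y - z) (z - p) := by
      have : 1 ≤ ‖y - p‖^2 := by nlinarith
      rw [hpb] at e1
      nlinarith [norm_nonneg (y-z)]
    have e3 : ‖(y1 - p1) - (z - p)‖ ≤ 1/5 := by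
      have : (y1 - p1) - (z - p) = (y1 - z) - (p1 - p) := by abel
      rw [this]
      refine (norm_sub_le _ _).trans ?_
      rw [← dist_eq_norm, ← dist_eq_norm]
      linarith [dist_triangle_right y1 z y0, dist_triangle_right p1 p p0]
    have e4 : |inner ℝ ((y1 - p1) - (z - p)) (y - z)| ≤ 1/5 * ‖y - z‖ :=
      (abs_real_inner_le_norm _ _).trans (by gcongr)
    have e5 : inner ℝ (y1 - p1) (y - z) = inner ℝ ((y1 - p1) - (z - p)) (y - z) + inner ℝ (y - z) (z - p) := by
      rw [inner_sub_left _ (z - p), real_inner_comm (z-p)]; ring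
    rw [e5]
    have := (abs_le.1 e4).1
    linarith
  have hM2 : ∀ y ∈ M, ∀ z ∈ M, dist y z ≤ L * dist (Q y) (Q z) := by
    intro y hy z hz
    apply hQ2
    rw [abs_le]
    refine ⟨half y hy z hz, ?_⟩
    have := half z hz y hy
    rw [← neg_sub y z, inner_neg_right, norm_neg] at this
    linarith
  have hinj : InjOn Q M := by
    intro y hy z hz h
    have := hM2 y hy z hz
    rw [h, dist_self, mul_zero] at this
    exact dist_le_zero.1 this
  have hinv : ∀ y ∈ M, Function.invFunOn Q M (Q y) = y := fun y hy => hinj.leftInvOn_invFunOn hy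
  have hlip : LipschitzOnWith L (Function.invFunOn Q M) (Q '' M) := by
    refine LipschitzOnWith.of_dist_le_mul ?_
    rintro _ ⟨y, hy, rfl⟩ _ ⟨z, hz, rfl⟩
    rw [hinv y hy, hinv z hz]
    exact hM2 y hy z hz
  have hMeq : M = Function.invFunOn Q M '' (Q '' M) := by
    rw [image_image]
    ext y
    constructor
    · intro hy; exact ⟨y, hy, hinv y hy⟩
    · rintro ⟨z, hz, rfl⟩
      show Function.invFunOn Q M (Q z) ∈ M
      rw [hinv z hz]; exact hz
  have hsub : Q '' M ⊆ closedBall (Q y1) 1 := by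
    rintro _ ⟨y, hy, rfl⟩
    have := hQ.dist_le_mul y y1
    have h2 := (hM y hy).1
    simp only [NNReal.coe_one, one_mul] at this
    rw [mem_closedBall]
    linarith [dist_triangle_right y y1 y0]
  calc μH[(n:ℝ)] M = μH[(n:ℝ)] (Function.invFunOn Q M '' (Q '' M)) := by rw [← hMeq]
    _ ≤ (L : ℝ≥0∞) ^ (n:ℝ) * μH[(n:ℝ)] (Q '' M) := hlip.hausdorffMeasure_image_le (by positivity)
    _ ≤ (L : ℝ≥0∞) ^ (n:ℝ) * μH[(n:ℝ)] (closedBall (Q y1) 1) := by gcongr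
    _ = _ := by
      congr 1
      have : (μH[(n:ℝ)] : Measure (Fin n → ℝ)) = volume := by
        have := hausdorffMeasure_pi_real (ι := Fin n)
        simpa using this
      rw [this, Real.volume_pi_closedBall _ (by norm_num)]
      simp

lemma unit_bound (n : ℕ) (a : ℝ) : ∃ C : ℝ≥0∞, C ≠ ⊤ ∧ ∀ (M : Set (EuclideanSpace ℝ (Fin (n+1)))),
    M ⊆ closedBall 0 a → (∀ y ∈ M, ∃ p, dist y p = 1 ∧ ∀ z ∈ M, 1 ≤ dist z p) →
    μH[(n:ℝ)] M ≤ C := by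
  obtain ⟨C, hC, hCb⟩ := piece_bound n
  obtain ⟨T, -, hTf, hT⟩ := (isCompact_closedBall (0 : EuclideanSpace ℝ (Fin (n+1))) (a+1)).finite_cover_balls (e := 1/20) (by norm_num)
  lift T to Finset (EuclideanSpace ℝ (Fin (n+1))) using hTf
  refine ⟨∑ q ∈ T ×ˢ T, C, by simp [ENNReal.mul_ne_top, hC], ?_⟩
  intro M hMa hM
  let Mp : EuclideanSpace ℝ (Fin (n+1)) × EuclideanSpace ℝ (Fin (n+1)) → Set (EuclideanSpace ℝ (Fin (n+1))) := fun q =>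
    {y | y ∈ M ∧ dist y q.2 ≤ 1/20 ∧ ∃ p, dist p q.1 ≤ 1/20 ∧ dist y p = 1 ∧ ∀ z ∈ M, 1 ≤ dist z p}
  have hsub : M ⊆ ⋃ q ∈ T ×ˢ T, Mp q := by
    intro y hy
    obtain ⟨p, hp1, hp2⟩ := hM y hy
    have hya := hMa hy
    rw [mem_closedBall] at hya
    have h1 : y ∈ closedBall (0 : EuclideanSpace ℝ (Fin (n+1))) (a+1) := by rw [mem_closedBall]; linarith
    have h2 : p ∈ closedBall (0 : EuclideanSpace ℝ (Fin (n+1))) (a+1) := by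
      rw [mem_closedBall]; rw [dist_comm] at hp1; linarith [dist_triangle p y 0]
    have h1' := hT h1
    have h2' := hT h2
    simp only [mem_iUnion] at h1' h2'
    obtain ⟨y0, hy0, hy0'⟩ := h1'
    obtain ⟨p0, hp0, hp0'⟩ := h2'
    simp only [mem_iUnion]
    exact ⟨(p0, y0), Finset.mem_product.2 ⟨hp0, hy0⟩, hy, (mem_ball.1 hy0').le, p, (mem_ball.1 hp0').le, hp1, hp2⟩
  refine (measure_mono hsub).trans ((measure_biUnion_finset_le _ _).trans ?_)
  refine Finset.sum_le_sum fun q _ => hCb _ q.1 q.2 ?_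
  rintro y ⟨hy, h1, p, h2, h3, h4⟩
  exact ⟨h1, p, h2, h3, fun z hz => h4 z hz.1⟩

lemma level_bound (d : ℕ) (hd : 1 ≤ d) (a : ℝ) : ∃ C : ℝ≥0, ∀ (F : Set (EuclideanSpace ℝ (Fin d))),
    F.Nonempty → IsCompact F → ∀ (x : EuclideanSpace ℝ (Fin d)) (ε : ℝ), 0 < ε →
    μH[(d:ℝ) - 1] ({y | infDist y F = ε} ∩ closedBall x (a * ε)) ≤ ENNReal.ofReal (ε ^ ((d:ℝ) - 1)) * C := by
  obtain ⟨n, rfl⟩ : ∃ n, d = n + 1 := ⟨d - 1, by omega⟩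
  obtain ⟨C, hC, hCb⟩ := unit_bound n a
  lift C to ℝ≥0 using hC
  refine ⟨C, fun F hFn hFc x ε hε => ?_⟩
  have hn : ((n+1 : ℕ) : ℝ) - 1 = n := by push_cast; ring
  rw [hn]
  let h : EuclideanSpace ℝ (Fin (n+1)) → EuclideanSpace ℝ (Fin (n+1)) := fun y => x + ε • y
  let k : EuclideanSpace ℝ (Fin (n+1)) → EuclideanSpace ℝ (Fin (n+1)) := fun y => ε⁻¹ • (y - x)
  have hhk : ∀ y, h (k y) = y := fun y => by simp [h, k, smul_smul, hε.ne']
  have hk : ∀ y z, dist (k y) (k z) = ε⁻¹ * dist y z := fun y z => by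
    simp only [k]
    rw [dist_smul₀, dist_sub_right, Real.norm_eq_abs, abs_of_pos (inv_pos.2 hε)]
  have hh : LipschitzWith ε.toNNReal h := LipschitzWith.of_dist_le_mul fun y z => by
    simp only [h]
    rw [dist_add_left, dist_smul₀, Real.norm_eq_abs, abs_of_pos hε, Real.coe_toNNReal _ hε.le]
  set M := {y | infDist y F = ε} ∩ closedBall x (a * ε) with hMdef
  have e : M = h '' (k '' M) := by
    rw [image_image]; simp [hhk]
  rw [e]
  refine (hh.hausdorffMeasure_image_le (by positivity) _).trans ?_
  change ENNReal.ofReal ε ^ (n:ℝ) * _ ≤ _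
  rw [ENNReal.ofReal_rpow_of_pos hε]
  gcongr
  refine hCb _ ?_ ?_
  · rintro _ ⟨y, hy, rfl⟩
    have h1 : k x = 0 := by simp [k]
    have := hy.2
    rw [mem_closedBall] at this ⊢
    rw [← h1, hk, inv_mul_le_iff₀ hε]; linarith
  · rintro _ ⟨y, hy, rfl⟩
    obtain ⟨p, hp, hpd⟩ := hFc.exists_infDist_eq_dist hFn y
    refine ⟨k p, ?_, ?_⟩
    · rw [hk, ← hpd, hy.1, inv_mul_cancel₀ hε.ne']
    · rintro _ ⟨z, hz, rfl⟩
      rw [hk, ← inv_mul_cancel₀ hε.ne']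
      have : ε ≤ dist z p := by rw [← show infDist z F = ε from hz.1]; exact infDist_le_dist_of_mem hp
      have := (inv_pos.2 hε).le
      gcongr


lemma cth_iff_exists {E : Type*} [MetricSpace E] {F : Set E} (hF : IsCompact F) {ε : ℝ} (hε : 0 ≤ ε) (y : E) :
    y ∈ cthickening ε F ↔ ∃ z ∈ F, dist y z ≤ ε := by
  rw [hF.cthickening_eq_biUnion_closedBall hε]
  simp

lemma cth_iff_infDist {E : Type*} [MetricSpace E] {F : Set E} (hF : IsCompact F) (hn : F.Nonempty) {ε : ℝ} (hε : 0 ≤ ε) (y : E) :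
    y ∈ cthickening ε F ↔ infDist y F ≤ ε := by
  rw [cth_iff_exists hF hε]
  constructor
  · rintro ⟨z, hz, h⟩; exact (infDist_le_dist_of_mem hz).trans h
  · intro h
    obtain ⟨z, hz, h2⟩ := hF.exists_infDist_eq_dist hn y
    exact ⟨z, hz, h2 ▸ h⟩

def Lmax {E : Type*} [MetricSpace E] (F : Set E) (n : ℕ) : Set E :=
  {y | ∀ z, dist z y < 1 / ((n:ℝ) + 1) → infDist z F ≤ infDist y F}

lemma Lmax_closed {E : Type*} [MetricSpace E] (F : Set E) (n : ℕ) : IsClosed (Lmax F n) := by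
  have : Lmax F n = ⋂ z, ({y | 1 / ((n:ℝ) + 1) ≤ dist z y} ∪ {y | infDist z F ≤ infDist y F}) := by
    ext y
    simp only [Lmax, mem_iInter, mem_union]
    refine forall_congr' fun z => ?_
    constructor
    · intro h
      by_cases h2 : dist z y < 1 / ((n:ℝ) + 1)
      · exact Or.inr (h h2)
      · exact Or.inl (not_lt.1 h2)
    · rintro (h | h) h2
      · exact absurd h2 (not_lt.2 h)
      · exact h
  rw [this]
  refine isClosed_iInter fun z => IsClosed.union ?_ ?_
  · exact isClosed_le continuous_const (by fun_prop)
  · exact isClosed_le continuous_const (continuous_infDist_pt F)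

lemma Lmax_mono {E : Type*} [MetricSpace E] (F : Set E) : Monotone (Lmax F) := by
  intro n m h y hy z hz
  refine hy z (hz.trans_le ?_)
  gcongr

lemma frontier_eq {E : Type*} [MetricSpace E] {F : Set E} (hF : IsCompact F) (hn : F.Nonempty) {ε : ℝ} (hε : 0 < ε) :
    frontier (cthickening ε F) = {y | infDist y F = ε} \ ⋃ n, Lmax F n := by
  rw [isClosed_cthickening.frontier_eq]
  ext y
  constructor
  · rintro ⟨h1, h2⟩
    have h3 : infDist y F = ε := by
      refine le_antisymm ((cth_iff_infDist hF hn hε.le y).1 h1) ?_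
      by_contra hlt
      push Not at hlt
      apply h2
      rw [mem_interior_iff_mem_nhds]
      filter_upwards [(continuous_infDist_pt F).continuousAt.eventually (gt_mem_nhds hlt)] with z hz
      exact (cth_iff_infDist hF hn hε.le z).2 (le_of_lt hz)
    refine ⟨h3, fun h4 => h2 ?_⟩
    obtain ⟨n, h4⟩ := mem_iUnion.1 h4
    rw [mem_interior_iff_mem_nhds]
    refine mem_of_superset (ball_mem_nhds y (ε := 1 / ((n:ℝ)+1)) (by positivity)) fun z hz => ?_
    exact (cth_iff_infDist hF hn hε.le z).2 (h3 ▸ h4 z (mem_ball.1 hz))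
  · rintro ⟨h1, h2⟩
    have h1 : infDist y F = ε := h1
    refine ⟨(cth_iff_infDist hF hn hε.le y).2 h1.le, fun h3 => h2 ?_⟩
    rw [mem_interior_iff_mem_nhds, Metric.mem_nhds_iff] at h3
    obtain ⟨δ, hδ, h3⟩ := h3
    obtain ⟨n, hn'⟩ := exists_nat_one_div_lt hδ
    refine mem_iUnion.2 ⟨n, fun z hz => ?_⟩
    rw [h1]
    exact (cth_iff_infDist hF hn hε.le z).1 (h3 (mem_ball.2 (hz.trans hn')))

lemma frontier_meas (d : ℕ) (hd : 1 ≤ d) (a : ℝ) (F : Set (EuclideanSpace ℝ (Fin d)))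
    (hn : F.Nonempty) (hF : IsCompact F) :
    ∃ G : ℝ × EuclideanSpace ℝ (Fin d) → ℝ≥0∞, Measurable G ∧ ∀ ε x, 0 < ε →
      G (ε, x) = μH[(d:ℝ) - 1] (frontier (cthickening ε F) ∩ closedBall x (a * ε)) := by
  have hs : (0:ℝ) ≤ (d:ℝ) - 1 := by
    have : (1:ℝ) ≤ d := by exact_mod_cast hd
    linarith
  obtain ⟨C, hC⟩ := level_bound d hd a
  let E := EuclideanSpace ℝ (Fin d)
  let C0 : Set ((ℝ × E) × E) := {q | infDist q.2 F = q.1.1 ∧ dist q.2 q.1.2 ≤ a * q.1.1}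
  have hC0 : IsClosed C0 := by
    refine IsClosed.inter ?_ ?_
    · exact isClosed_eq ((continuous_infDist_pt F).comp continuous_snd) (by fun_prop)
    · exact isClosed_le (f := fun q : (ℝ × E) × E => dist q.2 q.1.2) (g := fun q => a * q.1.1) (by fun_prop) (by fun_prop)
  let C1 : ℕ → Set ((ℝ × E) × E) := fun n => C0 ∩ {q | q.2 ∈ Lmax F n}
  have hC1 : ∀ n, IsClosed (C1 n) := fun n => hC0.inter ((Lmax_closed F n).preimage continuous_snd)
  refine ⟨fun p => μH[(d:ℝ) - 1] {y | (p, y) ∈ C0} - ⨆ n, μH[(d:ℝ) - 1] {y | (p, y) ∈ C1 n}, ?_, ?_⟩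
  · exact (hm_slice_measurable _ hs C0 hC0).sub (Measurable.iSup fun n => hm_slice_measurable _ hs (C1 n) (hC1 n))
  · intro ε x hε
    have e0 : {y | ((ε, x), y) ∈ C0} = {y | infDist y F = ε} ∩ closedBall x (a * ε) := rfl
    have e1 : ∀ n, {y | ((ε, x), y) ∈ C1 n} = ({y | infDist y F = ε} ∩ closedBall x (a * ε)) ∩ Lmax F n := fun n => rfl
    have hfin : μH[(d:ℝ) - 1] ({y | infDist y F = ε} ∩ closedBall x (a * ε)) ≠ ⊤ :=
      ((hC F hn hF x ε hε).trans_lt (ENNReal.mul_lt_top ENNReal.ofReal_lt_top ENNReal.coe_lt_top)).ne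
    beta_reduce
    rw [frontier_eq hF hn hε]
    simp only [e0, e1]
    rw [← Monotone.measure_iUnion, ← inter_iUnion, ← measure_sdiff]
    · congr 1
      ext y
      simp only [Set.mem_sdiff, mem_inter_iff]
      tauto
    · exact inter_subset_left
    · refine MeasurableSet.nullMeasurableSet (MeasurableSet.inter (MeasurableSet.inter ?_ ?_) ?_)
      · exact (isClosed_eq (continuous_infDist_pt F) continuous_const).measurableSet
      · exact isClosed_closedBall.measurableSet
      · exact MeasurableSet.iUnion fun n => (Lmax_closed F n).measurableSet
    · exact ((measure_mono inter_subset_left).trans_lt (lt_top_iff_ne_top.2 hfin)).ne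
    · intro n m h
      exact inter_subset_inter_right _ (Lmax_mono F h)

noncomputable def kf (d : ℕ) (F : Set (EuclideanSpace ℝ (Fin d))) (a ε : ℝ) (x : EuclideanSpace ℝ (Fin d)) : ℝ :=
  ε ^ (-((d : ℝ) - 1)) *
    (μH[(d:ℝ) - 1] (frontier (Metric.cthickening ε F) ∩ Metric.closedBall x (a * ε))).toReal * ε⁻¹

lemma kf_meas (d : ℕ) (hd : 1 ≤ d) (a : ℝ) (F : Set (EuclideanSpace ℝ (Fin d)))
    (hn : F.Nonempty) (hF : IsCompact F) :
    ∃ g : ℝ × EuclideanSpace ℝ (Fin d) → ℝ, Measurable g ∧ ∀ ε x, 0 < ε → g (ε, x) = kf d F a ε x := by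
  obtain ⟨G, hG, hG2⟩ := frontier_meas d hd a F hn hF
  refine ⟨fun p => p.1 ^ (-((d : ℝ) - 1)) * (G p).toReal * p.1⁻¹, ?_, ?_⟩
  · have := hG.ennreal_toReal
    fun_prop
  · intro ε x hε
    simp only [kf, hG2 ε x hε]

lemma kf_bound (d : ℕ) (hd : 1 ≤ d) (a : ℝ) (F : Set (EuclideanSpace ℝ (Fin d)))
    (hn : F.Nonempty) (hF : IsCompact F) :
    ∃ C : ℝ, 0 ≤ C ∧ ∀ ε x, 0 < ε → 0 ≤ kf d F a ε x ∧ kf d F a ε x ≤ C * ε⁻¹ := by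
  obtain ⟨C, hC⟩ := level_bound d hd a
  refine ⟨C, C.2, fun ε x hε => ⟨by unfold kf; positivity, ?_⟩⟩
  unfold kf
  have h1 : μH[(d:ℝ) - 1] (frontier (Metric.cthickening ε F) ∩ Metric.closedBall x (a * ε)) ≤
      ENNReal.ofReal (ε ^ ((d:ℝ) - 1)) * C := by
    refine (measure_mono ?_).trans (hC F hn hF x ε hε)
    rw [frontier_eq hF hn hε]
    exact inter_subset_inter_left _ sdiff_subset
  have h2 := ENNReal.toReal_mono (ENNReal.mul_ne_top ENNReal.ofReal_ne_top ENNReal.coe_ne_top) h1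
  rw [ENNReal.toReal_mul, ENNReal.toReal_ofReal (by positivity), ENNReal.coe_toReal] at h2
  have h3 : ε ^ (-((d : ℝ) - 1)) * ε ^ ((d:ℝ) - 1) = 1 := by
    rw [← Real.rpow_add hε]; simp
  calc _ ≤ ε ^ (-((d : ℝ) - 1)) * (ε ^ ((d:ℝ) - 1) * C) * ε⁻¹ := by gcongr
    _ = (ε ^ (-((d : ℝ) - 1)) * ε ^ ((d:ℝ) - 1)) * C * ε⁻¹ := by ring
    _ = _ := by rw [h3, one_mul]


lemma sim_homeo (d : ℕ) (S : EuclideanSpace ℝ (Fin d) → EuclideanSpace ℝ (Fin d)) (r : ℝ) (hr : 0 < r)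
    (hS : ∀ x y, dist (S x) (S y) = r * dist x y) :
    ∃ e : EuclideanSpace ℝ (Fin d) ≃ₜ EuclideanSpace ℝ (Fin d), ⇑e = S := by
  have hi : Isometry (fun x => r⁻¹ • S x) := Isometry.of_dist_eq fun x y => by
    rw [dist_smul₀, hS, Real.norm_eq_abs, abs_of_pos (inv_pos.2 hr), inv_mul_cancel_left₀ hr.ne']
  let T := hi.affineIsometryOfStrictConvexSpace.toAffineIsometryEquiv rfl
  refine ⟨T.toHomeomorph.trans (Homeomorph.smulOfNeZero r hr.ne'), ?_⟩
  ext1 x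
  change r • (r⁻¹ • S x) = S x
  rw [smul_smul, mul_inv_cancel₀ hr.ne', one_smul]

lemma sim_infDist {E : Type*} [MetricSpace E] (S : E → E) (r : ℝ) (hr : 0 < r)
    (hS : ∀ x y, dist (S x) (S y) = r * dist x y) (A : Set E) (x : E) :
    infDist (S x) (S '' A) = r * infDist x A := by
  rcases A.eq_empty_or_nonempty with rfl | hA
  · simp
  refine le_antisymm ?_ ?_
  · rw [← div_le_iff₀' hr]
    refine (le_infDist hA).2 fun y hy => ?_
    rw [div_le_iff₀' hr, ← hS]
    exact infDist_le_dist_of_mem (mem_image_of_mem S hy)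
  · refine (le_infDist (hA.image S)).2 ?_
    rintro _ ⟨y, hy, rfl⟩
    rw [hS]
    gcongr
    exact infDist_le_dist_of_mem hy

lemma sim_hausdorff {E : Type*} [MetricSpace E] [MeasurableSpace E] [BorelSpace E] (S : E → E) (r : ℝ) (hr : 0 < r)
    (hS : ∀ x y, dist (S x) (S y) = r * dist x y) (s : ℝ) (hs : 0 ≤ s) (A : Set E) :
    (μH[s] (S '' A)).toReal = r ^ s * (μH[s] A).toReal := by
  have h1 : LipschitzWith r.toNNReal S := LipschitzWith.of_dist_le_mul fun x y => by
    rw [Real.coe_toNNReal _ hr.le, hS]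
  have h2 : AntilipschitzWith (r⁻¹).toNNReal S := AntilipschitzWith.of_le_mul_dist fun x y => by
    rw [Real.coe_toNNReal _ (inv_pos.2 hr).le, hS, inv_mul_cancel_left₀ hr.ne']
  have a1 := h1.hausdorffMeasure_image_le hs A
  have a2 := h2.le_hausdorffMeasure_image hs A
  change _ ≤ ENNReal.ofReal r ^ s * _ at a1
  change _ ≤ ENNReal.ofReal r⁻¹ ^ s * _ at a2
  rw [ENNReal.ofReal_rpow_of_pos hr] at a1
  rw [ENNReal.ofReal_rpow_of_pos (inv_pos.2 hr)] at a2
  have : μH[s] (S '' A) = ENNReal.ofReal (r ^ s) * μH[s] A := by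
    refine le_antisymm a1 ?_
    calc _ ≤ ENNReal.ofReal (r ^ s) * (ENNReal.ofReal (r⁻¹ ^ s) * μH[s] (S '' A)) := by gcongr
      _ = _ := by
        rw [← mul_assoc, ← ENNReal.ofReal_mul (by positivity), ← Real.mul_rpow hr.le (by positivity), mul_inv_cancel₀ hr.ne']
        simp
  rw [this, ENNReal.toReal_mul, ENNReal.toReal_ofReal (by positivity)]

lemma F_sub_J {d N : ℕ}
    (S : Fin N → EuclideanSpace ℝ (Fin d) → EuclideanSpace ℝ (Fin d))
    (r : Fin N → ℝ) (hr : ∀ i, r i ∈ Set.Ioo (0 : ℝ) 1)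
    (hS : ∀ i x y, dist (S i x) (S i y) = r i * dist x y)
    (F : Set (EuclideanSpace ℝ (Fin d)))
    (hF_ne : F.Nonempty) (hF_cpt : IsCompact F)
    (hF_self : F = ⋃ i, S i '' F)
    (J : Set (EuclideanSpace ℝ (Fin d))) (hJ_cpt : IsCompact J) (hJn : J.Nonempty)
    (hJ_sub : ∀ i, S i '' J ⊆ J) : F ⊆ J := by
  obtain ⟨x, hx, hmax⟩ := hF_cpt.exists_isMaxOn hF_ne (continuous_infDist_pt J).continuousOn
  have hx' := hx
  rw [hF_self, mem_iUnion] at hx'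
  obtain ⟨i, y, hy, rfl⟩ := hx'
  have h1 : infDist (S i y) J ≤ r i * infDist y J := by
    rw [← sim_infDist (S i) (r i) (hr i).1 (hS i)]
    exact infDist_le_infDist_of_subset (hJ_sub i) (hJn.image _)
  have h2 : infDist y J ≤ infDist (S i y) J := hmax hy
  have h3 : infDist (S i y) J ≤ 0 := by
    have := (hr i).1
    have := (hr i).2
    have : (0:ℝ) ≤ infDist y J := infDist_nonneg
    nlinarith
  intro z hz
  have h4 : infDist z J ≤ infDist (S i y) J := hmax hz
  exact (hJ_cpt.isClosed.mem_iff_infDist_zero hJn).2 (le_antisymm (h4.trans h3) infDist_nonneg)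

lemma local_eq {d N : ℕ}
    (S : Fin N → EuclideanSpace ℝ (Fin d) → EuclideanSpace ℝ (Fin d))
    (r : Fin N → ℝ) (hr : ∀ i, r i ∈ Set.Ioo (0 : ℝ) 1)
    (hS : ∀ i x y, dist (S i x) (S i y) = r i * dist x y)
    (F : Set (EuclideanSpace ℝ (Fin d)))
    (hF_self : F = ⋃ i, S i '' F)
    (J : Set (EuclideanSpace ℝ (Fin d))) (hFJ : F ⊆ J)
    (hJ_reg : J = closure (interior J))
    (hJ_disj : ∀ i j, i ≠ j → Disjoint (S i '' interior J) (S j '' interior J))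
    (i : Fin N) (z) (hz : z ∈ F) (hzJ : z ∈ interior (S i '' J)) : z ∈ S i '' F := by
  rw [hF_self, mem_iUnion] at hz
  obtain ⟨j, hz⟩ := hz
  by_cases hij : i = j
  · rw [hij]; exact hz
  exfalso
  obtain ⟨ei, hei⟩ := sim_homeo d (S i) (r i) (hr i).1 (hS i)
  obtain ⟨ej, hej⟩ := sim_homeo d (S j) (r j) (hr j).1 (hS j)
  have h1 : z ∈ closure (S j '' interior J) := by
    rw [← hej, ← ej.image_closure, ← hJ_reg, hej]
    exact image_mono hFJ hz
  rw [← hei, ← ei.image_interior, hei] at hzJ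
  have ho : IsOpen (S i '' interior J) := by
    rw [← hei]; exact ei.isOpenMap _ isOpen_interior
  exact ((hJ_disj i j hij).closure_right ho).le_bot ⟨hzJ, h1⟩

lemma kf_scale {d N : ℕ} (hd : 1 ≤ d)
    (S : Fin N → EuclideanSpace ℝ (Fin d) → EuclideanSpace ℝ (Fin d))
    (r : Fin N → ℝ) (hr : ∀ i, r i ∈ Set.Ioo (0 : ℝ) 1)
    (hS : ∀ i x y, dist (S i x) (S i y) = r i * dist x y)
    (F : Set (EuclideanSpace ℝ (Fin d))) (hF_cpt : IsCompact F)
    (hF_self : F = ⋃ i, S i '' F)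
    (J : Set (EuclideanSpace ℝ (Fin d))) (hFJ : F ⊆ J)
    (hJ_reg : J = closure (interior J))
    (hJ_disj : ∀ i j, i ≠ j → Disjoint (S i '' interior J) (S j '' interior J))
    (a b : ℝ) (ha : 1 < a) (hb : 2 * a ≤ b)
    (i : Fin N) (x : EuclideanSpace ℝ (Fin d)) (ε : ℝ) (hε : 0 < ε)
    (h : b * ε ≤ infDist (S i x) (S i '' J)ᶜ) :
    kf d F a ε (S i x) = (r i)⁻¹ * kf d F a (ε / r i) x := by
  have hri := (hr i).1
  obtain ⟨e, he⟩ := sim_homeo d (S i) (r i) (hr i).1 (hS i)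
  have hball : ball (S i x) (b * ε) ⊆ interior (S i '' J) := by
    refine interior_maximal ?_ isOpen_ball
    intro z hz
    by_contra hcon
    have : infDist (S i x) (S i '' J)ᶜ ≤ dist (S i x) z := infDist_le_dist_of_mem hcon
    rw [mem_ball'] at hz
    linarith
  have hSF : IsCompact (S i '' F) := by rw [← he]; exact hF_cpt.image e.continuous
  set U := ball (S i x) (b * ε - ε) with hU
  have hcU : closedBall (S i x) (a * ε) ⊆ U := by
    refine closedBall_subset_ball ?_
    nlinarith
  have hSFF : S i '' F ⊆ F := by
    conv_rhs => rw [hF_self]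
    exact subset_iUnion (fun i => S i '' F) i
  have e1 : cthickening ε F ∩ U = cthickening ε (S i '' F) ∩ U := by
    ext y
    simp only [mem_inter_iff, cth_iff_exists hF_cpt hε.le, cth_iff_exists hSF hε.le]
    refine and_congr_left fun hy => ⟨?_, ?_⟩
    · rintro ⟨z, hz, hyz⟩
      refine ⟨z, local_eq S r hr hS F hF_self J hFJ hJ_reg hJ_disj i z hz (hball ?_), hyz⟩
      rw [hU, mem_ball] at hy
      rw [mem_ball]
      rw [dist_comm] at hyz
      linarith [dist_triangle z y (S i x)]
    · rintro ⟨z, hz, hyz⟩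
      exact ⟨z, hSFF hz, hyz⟩
  have e2 : frontier (cthickening ε F) ∩ U = frontier (cthickening ε (S i '' F)) ∩ U := by
    rw [← frontier_inter_open_inter isOpen_ball, e1, frontier_inter_open_inter isOpen_ball]
  have e3 : frontier (cthickening ε F) ∩ closedBall (S i x) (a * ε) =
      frontier (cthickening ε (S i '' F)) ∩ closedBall (S i x) (a * ε) := by
    rw [← inter_eq_self_of_subset_right hcU, ← inter_assoc, e2, inter_assoc]
  have e4 : cthickening ε (S i '' F) = S i '' cthickening (ε / r i) F := by
    ext y
    obtain ⟨y, rfl⟩ := e.surjective y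
    rw [he, (he ▸ e.injective : Function.Injective (S i)).mem_set_image, cth_iff_exists hSF hε.le, cth_iff_exists hF_cpt (by positivity)]
    simp only [exists_mem_image, hS, le_div_iff₀' hri]
  have e5 : closedBall (S i x) (a * ε) = S i '' closedBall x (a * (ε / r i)) := by
    ext y
    obtain ⟨y, rfl⟩ := e.surjective y
    rw [he, (he ▸ e.injective : Function.Injective (S i)).mem_set_image, mem_closedBall, mem_closedBall, hS, ← mul_div_assoc, le_div_iff₀' hri]
  have hs : (0:ℝ) ≤ (d:ℝ) - 1 := by
    have : (1:ℝ) ≤ d := by exact_mod_cast hd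
    linarith
  unfold kf
  rw [e3, e4, e5, ← he, ← e.image_frontier, ← image_inter e.injective, he, sim_hausdorff (S i) (r i) hri (hS i) _ hs,
    Real.div_rpow hε.le hri.le, Real.rpow_neg hri.le, inv_div]
  field_simp


noncomputable def maxB {X : Type*} (T : X → X) (h : X → ℝ) : ℕ → X → ℝ
  | 0 => fun _ => 0
  | n + 1 => fun x => max 0 (h x + maxB T h n (T x))

lemma maxB_nonneg {X : Type*} (T : X → X) (h : X → ℝ) (n : ℕ) (x : X) : 0 ≤ maxB T h n x := by
  cases n with
  | zero => exact le_rfl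
  | succ n => exact le_max_left _ _

lemma maxB_succ_le {X : Type*} (T : X → X) (h : X → ℝ) (n : ℕ) : ∀ x, maxB T h n x ≤ maxB T h (n+1) x := by
  induction n with
  | zero => exact fun x => maxB_nonneg T h 1 x
  | succ n ih =>
    intro x
    show max 0 (h x + maxB T h n (T x)) ≤ max 0 (h x + maxB T h (n+1) (T x))
    have := ih (T x)
    gcongr

lemma birk_le_maxB {X : Type*} (T : X → X) (h : X → ℝ) (n : ℕ) : ∀ x, birkhoffSum T h n x ≤ maxB T h n x := by
  induction n with
  | zero => intro x; simp [maxB]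
  | succ n ih =>
    intro x
    rw [birkhoffSum_succ']
    exact (add_le_add_right (ih (T x)) (h x)).trans (le_max_right _ _)

lemma birk_bdd {X : Type*} [MeasurableSpace X] {μ : Measure X} [IsProbabilityMeasure μ] {T : X → X}
    (hT : Ergodic T μ) (h : X → ℝ) (hm : Measurable h) (hi : Integrable h μ) (hneg : ∫ x, h x ∂μ < 0) :
    ∀ᵐ x ∂μ, ∃ B : ℝ, ∀ n, birkhoffSum T h n x ≤ B := by
  have hTm := hT.toMeasurePreserving.measurable
  have hMm : ∀ n, Measurable (maxB T h n) := by
    intro n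
    induction n with
    | zero => exact measurable_const
    | succ n ih => exact measurable_const.max (hm.add (ih.comp hTm))
  have hMi : ∀ n, Integrable (maxB T h n) μ := by
    intro n
    induction n with
    | zero => exact integrable_zero _ _ _
    | succ n ih => exact (integrable_zero _ _ _).sup (hi.add (hT.toMeasurePreserving.integrable_comp_of_integrable ih))
  have hMmono : ∀ x, Monotone (fun n => maxB T h n x) := fun x => monotone_nat_of_le_succ fun n => maxB_succ_le T h n x
  let A : Set X := {x | BddAbove (range fun n => maxB T h n x)}
  have hA : MeasurableSet A := measurableSet_bddAbove_range hMm
  have hinv : T ⁻¹' A = A := by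
    ext x
    constructor
    · rintro ⟨B, hB⟩
      refine ⟨max 0 (h x + B), ?_⟩
      rintro _ ⟨n, rfl⟩
      cases n with
      | zero => exact le_max_left _ _
      | succ n =>
        have := hB ⟨n, rfl⟩
        show max 0 (h x + maxB T h n (T x)) ≤ _
        gcongr
    · rintro ⟨B, hB⟩
      refine ⟨B - h x, ?_⟩
      rintro _ ⟨n, rfl⟩
      have h1 := hB ⟨n+1, rfl⟩
      have h2 : h x + maxB T h n (T x) ≤ maxB T h (n+1) x := le_max_right _ _
      simp only at h1 ⊢
      linarith
  rcases hT.toPreErgodic.ae_mem_or_ae_notMem hA hinv with hcase | hcase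
  · filter_upwards [hcase] with x hx
    obtain ⟨B, hB⟩ := hx
    exact ⟨B, fun n => (birk_le_maxB T h n x).trans (hB ⟨n, rfl⟩)⟩
  · exfalso
    have hlim : Tendsto (fun n => ∫ x, (maxB T h (n+1) x - maxB T h n (T x)) ∂μ) atTop (𝓝 (∫ x, h x ∂μ)) := by
      refine tendsto_integral_of_dominated_convergence (fun x => |h x|) ?_ hi.abs ?_ ?_
      · intro n; exact ((hMm (n+1)).sub ((hMm n).comp hTm)).aestronglyMeasurable
      · intro n
        refine Eventually.of_forall fun x => ?_
        have h0 := maxB_nonneg T h n (T x)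
        show |max 0 (h x + maxB T h n (T x)) - maxB T h n (T x)| ≤ |h x|
        rcases max_cases 0 (h x + maxB T h n (T x)) with ⟨e, h1⟩ | ⟨e, h1⟩
        · rw [e, zero_sub, abs_neg, abs_of_nonneg h0]
          have := neg_abs_le (h x)
          linarith
        · rw [e]; ring_nf; exact le_rfl
      · filter_upwards [hcase] with x hx
        have hx' : T x ∉ A := fun hc => hx (hinv ▸ hc : x ∈ A)
        have htop : Tendsto (fun n => maxB T h n (T x)) atTop atTop := by
          rcases tendsto_atTop_of_monotone (hMmono (T x)) with h1 | ⟨l, hl⟩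
          · exact h1
          · exact absurd (hl.bddAbove_range) hx'
        refine tendsto_const_nhds.congr' ?_
        filter_upwards [htop.eventually_ge_atTop (-h x)] with n hn
        show h x = max 0 (h x + maxB T h n (T x)) - maxB T h n (T x)
        rw [max_eq_right (by linarith)]; ring
    have : 0 ≤ ∫ x, h x ∂μ := by
      refine ge_of_tendsto' hlim fun n => ?_
      rw [integral_sub (hMi _) (show Integrable (fun x => maxB T h n (T x)) μ from hT.toMeasurePreserving.integrable_comp_of_integrable (hMi n))]
      have e : ∫ x, maxB T h n (T x) ∂μ = ∫ x, maxB T h n x ∂μ := by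
        have := hT.toMeasurePreserving.map_eq
        conv_rhs => rw [← this]
        rw [integral_map hTm.aemeasurable (hMm n).aestronglyMeasurable]
      rw [e, sub_nonneg]
      exact integral_mono (hMi n) (hMi (n+1)) fun x => maxB_succ_le T h n x
    linarith

lemma birk_upper {X : Type*} [MeasurableSpace X] {μ : Measure X} [IsProbabilityMeasure μ] {T : X → X}
    (hT : Ergodic T μ) (g : X → ℝ) (hm : Measurable g) (hi : Integrable g μ) :
    ∀ᵐ x ∂μ, ∀ m : ℕ, ∀ᶠ n : ℕ in atTop, birkhoffSum T g n x / n ≤ ∫ x, g x ∂μ + 2 / ((m:ℝ) + 1) := by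
  rw [ae_all_iff]
  intro m
  set I := ∫ x, g x ∂μ
  have hη : (0:ℝ) < 1 / ((m:ℝ) + 1) := by positivity
  set η : ℝ := 1 / ((m:ℝ) + 1) with hηd
  have h1 := birk_bdd hT (fun x => g x - (I + η)) (hm.sub_const _) (hi.sub (integrable_const _)) (by
    rw [integral_sub hi (integrable_const _)]
    simp only [integral_const, probReal_univ, smul_eq_mul, one_mul]
    show I - (I + η) < 0
    linarith)
  filter_upwards [h1] with x ⟨B, hB⟩
  have e : ∀ n : ℕ, birkhoffSum T g n x ≤ B + n * (I + η) := by
    intro n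
    have := hB n
    have e2 : birkhoffSum T (fun x => g x - (I + η)) n x = birkhoffSum T g n x - n * (I + η) := by
      simp [birkhoffSum, Finset.sum_sub_distrib]
      ring
    rw [e2] at this; linarith
  have ht : Tendsto (fun n : ℕ => B / (n:ℝ)) atTop (𝓝 0) := tendsto_const_div_atTop_nhds_zero_nat B
  filter_upwards [ht.eventually (gt_mem_nhds hη), eventually_gt_atTop 0] with n hn hn0
  have hn0' : (0:ℝ) < n := by exact_mod_cast hn0
  have e3 : (2:ℝ) / ((m:ℝ) + 1) = 2 * η := by rw [hηd]; ring
  rw [e3]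
  rw [div_lt_iff₀ hn0'] at hn
  rw [div_le_iff₀ hn0']
  have := e n
  nlinarith

lemma birkhoff_ae {X : Type*} [MeasurableSpace X] {μ : Measure X} [IsProbabilityMeasure μ] {T : X → X}
    (hT : Ergodic T μ) (g : X → ℝ) (hm : Measurable g) (hi : Integrable g μ) :
    ∀ᵐ x ∂μ, Tendsto (fun n : ℕ => birkhoffSum T g n x / n) atTop (𝓝 (∫ x, g x ∂μ)) := by
  filter_upwards [birk_upper hT g hm hi, birk_upper hT (-g) hm.neg hi.neg] with x h1 h2
  rw [Metric.tendsto_nhds]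
  intro ε hε
  obtain ⟨m, hm⟩ := exists_nat_one_div_lt (half_pos hε)
  filter_upwards [h1 m, h2 m] with n a b
  rw [birkhoffSum_neg] at b
  simp only [Pi.neg_apply, integral_neg] at b
  have e3 : (2:ℝ) / ((m:ℝ) + 1) = 2 * (1 / ((m:ℝ) + 1)) := by ring
  rw [e3] at a b
  rw [neg_div] at b
  rw [Real.dist_eq, abs_lt]
  constructor <;> linarith

def shf {N : ℕ} (w : ℕ → Fin N) : ℕ → Fin N := fun n => w (n + 1)
def cyl {N : ℕ} (u : ℕ → Fin N) (n : ℕ) : Set (ℕ → Fin N) := {w | ∀ i, i < n → w i = u i}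

lemma shf_iter {N : ℕ} (n : ℕ) (w : ℕ → Fin N) (k : ℕ) : (shf^[n] w) k = w (k + n) := by
  induction n generalizing w with
  | zero => rfl
  | succ n ih => rw [Function.iterate_succ_apply, ih]; simp only [shf]; congr 1

lemma shf_meas {N : ℕ} : Measurable (shf (N := N)) := by
  unfold shf; fun_prop

lemma cyl_meas {N : ℕ} (u : ℕ → Fin N) (n : ℕ) : MeasurableSet (cyl u n) := by
  have : cyl u n = ⋂ i, ⋂ (_ : i < n), (fun w : ℕ → Fin N => w i) ⁻¹' {u i} := by
    ext w; simp [cyl]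
  rw [this]
  exact MeasurableSet.iInter fun i => MeasurableSet.iInter fun _ => measurable_pi_apply i (measurableSet_singleton _)

def cyls (N : ℕ) : Set (Set (ℕ → Fin N)) := {s | ∃ u n, s = cyl u n}

lemma cyls_pi (N : ℕ) : IsPiSystem (cyls N) := by
  rintro _ ⟨u, n, rfl⟩ _ ⟨v, m, rfl⟩ ⟨w0, h1, h2⟩
  refine ⟨w0, max n m, ?_⟩
  ext w
  constructor
  · rintro ⟨a, b⟩ i hi
    rcases lt_max_iff.1 hi with hi | hi
    · rw [a i hi, h1 i hi]
    · rw [b i hi, h2 i hi]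
  · intro h
    exact ⟨fun i hi => (h i (lt_max_of_lt_left hi)).trans (h1 i hi), fun i hi => (h i (lt_max_of_lt_right hi)).trans (h2 i hi)⟩

lemma cyls_gen (N : ℕ) : (MeasurableSpace.pi : MeasurableSpace (ℕ → Fin N)) = MeasurableSpace.generateFrom (cyls N) := by
  refine le_antisymm ?_ ?_
  · refine iSup_le fun k => ?_
    rw [← measurable_iff_comap_le]
    refine @measurable_to_countable' _ _ _ _ (MeasurableSpace.generateFrom (cyls N)) _ fun i => ?_
    have : (fun w : ℕ → Fin N => w k) ⁻¹' {i} =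
        ⋃ u : Fin k → Fin N, cyl (fun j => if h : j < k then u ⟨j, h⟩ else i) (k+1) := by
      ext w
      simp only [mem_preimage, mem_singleton_iff, mem_iUnion]
      constructor
      · intro h
        refine ⟨fun j => w j, fun j hj => ?_⟩
        by_cases hjk : j < k
        · simp [hjk]
        · have : j = k := by omega
          simp [this, h]
      · rintro ⟨u, hu⟩
        have := hu k (by omega)
        simpa using this
    rw [this]
    exact @MeasurableSet.iUnion _ _ (MeasurableSpace.generateFrom (cyls N)) _ _ fun u => MeasurableSpace.measurableSet_generateFrom ⟨_, _, rfl⟩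
  · refine MeasurableSpace.generateFrom_le ?_
    rintro _ ⟨u, n, rfl⟩
    exact cyl_meas u n

lemma cyl_val {N : ℕ} (ν : Measure (ℕ → Fin N)) [IsProbabilityMeasure ν] (p : Fin N → ℝ≥0∞)
    (hν : ∀ (n : ℕ) (u : Fin n → Fin N), ν {w : ℕ → Fin N | ∀ i : Fin n, w i = u i} = ∏ i, p (u i)) (u : ℕ → Fin N) (n : ℕ) : ν (cyl u n) = ∏ i ∈ Finset.range n, p (u i) := by
  rw [Finset.prod_range, ← hν n (fun i => u i)]
  congr 1
  ext w
  exact ⟨fun h i => h i i.2, fun h i hi => h ⟨i, hi⟩⟩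

lemma cyl_indep {N : ℕ} (ν : Measure (ℕ → Fin N)) [IsProbabilityMeasure ν] (p : Fin N → ℝ≥0∞)
    (hν : ∀ (n : ℕ) (u : Fin n → Fin N), ν {w : ℕ → Fin N | ∀ i : Fin n, w i = u i} = ∏ i, p (u i)) (u : ℕ → Fin N) (n : ℕ) :
    Measure.map (shf^[n]) (ν.restrict (cyl u n)) = ν (cyl u n) • ν := by
  have hm : Measurable (shf (N := N))^[n] := shf_meas.iterate n
  refine ext_of_generate_finite (cyls N) (cyls_gen N) (cyls_pi N) ?_ ?_
  · rintro _ ⟨v, m, rfl⟩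
    rw [Measure.map_apply hm (cyl_meas v m), Measure.restrict_apply (hm (cyl_meas v m)), Measure.smul_apply, smul_eq_mul]
    have : shf^[n] ⁻¹' cyl v m ∩ cyl u n = cyl (fun i => if i < n then u i else v (i - n)) (n + m) := by
      ext w
      constructor
      · rintro ⟨h1, h2⟩ i hi
        by_cases hin : i < n
        · simp only [hin, if_true]; exact h2 i hin
        · simp only [hin, if_false]
          have := h1 (i - n) (by omega)
          rw [shf_iter] at this
          rw [← this]; congr 1; omega
      · intro h
        refine ⟨fun i hi => ?_, fun i hi => ?_⟩
        · rw [shf_iter]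
          have := h (i + n) (by omega)
          simpa using this
        · have := h i (by omega)
          simpa [hi] using this
    rw [this, cyl_val ν p hν, cyl_val ν p hν, cyl_val ν p hν, Finset.prod_range_add]
    congr 1
    · refine Finset.prod_congr rfl fun i hi => ?_
      simp [Finset.mem_range.1 hi]
    · refine Finset.prod_congr rfl fun i hi => ?_
      simp
  · rw [Measure.map_apply hm MeasurableSet.univ]
    simp

lemma cyl_indep' {N : ℕ} (ν : Measure (ℕ → Fin N)) [IsProbabilityMeasure ν] (p : Fin N → ℝ≥0∞)
    (hν : ∀ (n : ℕ) (u : Fin n → Fin N), ν {w : ℕ → Fin N | ∀ i : Fin n, w i = u i} = ∏ i, p (u i)) (u : ℕ → Fin N) (n : ℕ) (B : Set (ℕ → Fin N)) (hB : MeasurableSet B) :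
    ν (cyl u n ∩ shf^[n] ⁻¹' B) = ν (cyl u n) * ν B := by
  have hm : Measurable (shf (N := N))^[n] := shf_meas.iterate n
  have := congrArg (fun μ => μ B) (cyl_indep ν p hν u n)
  rw [Measure.map_apply hm hB, Measure.restrict_apply (hm hB), inter_comm] at this
  simpa using this

lemma shf_mp {N : ℕ} (ν : Measure (ℕ → Fin N)) [IsProbabilityMeasure ν] (p : Fin N → ℝ≥0∞)
    (hν : ∀ (n : ℕ) (u : Fin n → Fin N), ν {w : ℕ → Fin N | ∀ i : Fin n, w i = u i} = ∏ i, p (u i)) : MeasurePreserving (shf (N := N)) ν ν := by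
  refine ⟨shf_meas, Measure.ext fun B hB => ?_⟩
  rw [Measure.map_apply shf_meas hB]
  have hd : ∀ B : Set (ℕ → Fin N), MeasurableSet B → ν B = ∑ i : Fin N, ν (cyl (fun _ => i) 1 ∩ B) := by
    intro B hB
    rw [← tsum_fintype (L := .unconditional _), ← measure_iUnion]
    · congr 1
      ext w
      simp [cyl]
    · intro i j hij
      refine Set.disjoint_left.2 fun w h1 h2 => hij ?_
      exact (h1.1 0 (by omega)).symm.trans (h2.1 0 (by omega))
    · exact fun i => (cyl_meas _ _).inter hB
  rw [hd _ (shf_meas hB)]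
  have h1 := hd univ MeasurableSet.univ
  simp only [inter_univ, measure_univ] at h1
  have h2 : ∀ i : Fin N, ν (cyl (fun _ => i) 1 ∩ shf ⁻¹' B) = ν (cyl (fun _ => i) 1) * ν B := fun i => by
    have := cyl_indep' ν p hν (fun _ => i) 1 B hB
    simpa using this
  simp only [h2]
  rw [← Finset.sum_mul, ← h1, one_mul]

lemma shf_ergodic {N : ℕ} (ν : Measure (ℕ → Fin N)) [IsProbabilityMeasure ν] (p : Fin N → ℝ≥0∞)
    (hν : ∀ (n : ℕ) (u : Fin n → Fin N), ν {w : ℕ → Fin N | ∀ i : Fin n, w i = u i} = ∏ i, p (u i)) : Ergodic (shf (N := N)) ν := by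
  refine ⟨shf_mp ν p hν, ⟨fun A hA hinv => ?_⟩⟩
  have h1 : ν.restrict A = ν A • ν := by
    refine ext_of_generate_finite (cyls N) (cyls_gen N) (cyls_pi N) ?_ (by simp)
    rintro _ ⟨u, n, rfl⟩
    rw [Measure.restrict_apply (cyl_meas u n)]
    have h2 : shf^[n] ⁻¹' A = A := by
      exact Function.IsFixedPt.preimage_iterate hinv n
    have := cyl_indep' ν p hν u n A hA
    rw [h2] at this
    rw [this, mul_comm]; rfl
  have h2 : ν A = ν A * ν A := by
    have := congrArg (fun μ => μ A) h1
    simpa using this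
  rw [eventuallyConst_set']
  by_cases h0 : ν A = 0
  · left; exact ae_eq_empty.2 h0
  · right
    have : ν A = 1 := by
      have h3 : ν A * 1 = ν A * ν A := by rw [mul_one]; exact h2
      exact ((ENNReal.mul_right_inj h0 (measure_ne_top _ _)).1 h3).symm
    rw [ae_eq_univ]
    exact (prob_compl_eq_zero_iff hA).2 this


lemma sandwich (δ : ℕ → ℝ) (hδ : ∀ n, 0 < δ n) (hanti : Antitone δ) (lam I : ℝ) (hlam : 0 < lam)
    (hl : Tendsto (fun n : ℕ => Real.log (δ n)⁻¹ / n) atTop (𝓝 lam))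
    (G : ℝ → ℝ) (hG : ∀ s t, 0 < s → s ≤ t → G t ≤ G s) (hG0 : ∀ s, 0 < s → 0 ≤ G s)
    (hGl : Tendsto (fun n : ℕ => G (δ n) / n) atTop (𝓝 I)) :
    Tendsto (fun t : ℝ => (Real.log t⁻¹)⁻¹ * G t) (𝓝[>] 0) (𝓝 (lam⁻¹ * I)) := by
  have hnat : Tendsto (fun n : ℕ => (n:ℝ)) atTop atTop := tendsto_natCast_atTop_atTop
  have htop : Tendsto (fun n => Real.log (δ n)⁻¹) atTop atTop := by
    have := hl.pos_mul_atTop hlam hnat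
    refine this.congr' ?_
    filter_upwards [eventually_gt_atTop 0] with n hn
    have : (n:ℝ) ≠ 0 := by positivity
    field_simp
  have hex : ∀ t : ℝ, 0 < t → ∃ n, δ n ≤ t := by
    intro t ht
    obtain ⟨n, hn⟩ := (htop.eventually_ge_atTop (Real.log t⁻¹)).exists
    refine ⟨n, ?_⟩
    rw [Real.log_inv, Real.log_inv] at hn
    exact (Real.log_le_log_iff (hδ n) ht).1 (by linarith)
  classical
  let k : ℝ → ℕ := fun t => if h : ∃ n, δ n ≤ t then Nat.find h - 1 else 0
  have hk : ∀ t, 0 < t → t < δ 0 → δ (k t + 1) ≤ t ∧ t < δ (k t) := by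
    intro t ht h0
    have h := hex t ht
    have h1 : k t = Nat.find h - 1 := by simp only [k]; rw [dif_pos h]
    have h2 := Nat.find_spec h
    have h3 : Nat.find h ≠ 0 := by
      intro h3; rw [h3] at h2; linarith
    have h4 : k t + 1 = Nat.find h := by omega
    refine ⟨by rw [h4]; exact h2, ?_⟩
    exact not_le.1 (Nat.find_min h (by omega))
  have hsmall : ∀ s : ℝ, 0 < s → ∀ᶠ t in 𝓝[>] (0:ℝ), 0 < t ∧ t < s := fun s hs => Ioo_mem_nhdsGT hs
  have hktop : Tendsto k (𝓝[>] 0) atTop := by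
    rw [Filter.tendsto_atTop]
    intro n
    filter_upwards [hsmall (δ 0) (hδ 0), hsmall (δ n) (hδ n)] with t h1 h2
    by_contra hc
    have := (hk t h1.1 h1.2).1
    have h3 := hanti (show k t + 1 ≤ n by omega)
    linarith [h2.2]
  have hq : Tendsto (fun n : ℕ => ((n:ℝ)+1) / n) atTop (𝓝 1) := by
    have : Tendsto (fun n : ℕ => 1 + 1 / (n:ℝ)) atTop (𝓝 (1 + 0)) := tendsto_const_nhds.add tendsto_one_div_atTop_nhds_zero_nat
    rw [add_zero] at this
    refine this.congr' ?_
    filter_upwards [eventually_gt_atTop 0] with n hn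
    have : (n:ℝ) ≠ 0 := by positivity
    field_simp
  have s1 : ∀ f : ℕ → ℝ, ∀ L, Tendsto (fun n : ℕ => f n / n) atTop (𝓝 L) → Tendsto (fun n : ℕ => f (n+1) / n) atTop (𝓝 L) := by
    intro f L hf
    have h1 := (hf.comp (tendsto_add_atTop_nat 1)).mul hq
    rw [mul_one] at h1
    refine h1.congr' ?_
    filter_upwards [eventually_gt_atTop 0] with n hn
    have : (n:ℝ) ≠ 0 := by positivity
    simp only [Function.comp, Nat.cast_add, Nat.cast_one]
    field_simp
  have hlo : Tendsto (fun n : ℕ => (Real.log (δ (n+1))⁻¹)⁻¹ * G (δ n)) atTop (𝓝 (lam⁻¹ * I)) := by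
    have h1 := ((s1 _ _ hl).inv₀ hlam.ne').mul hGl
    refine h1.congr' ?_
    filter_upwards [eventually_gt_atTop 0] with n hn
    have : (n:ℝ) ≠ 0 := by positivity
    field_simp
  have hhi : Tendsto (fun n : ℕ => (Real.log (δ n)⁻¹)⁻¹ * G (δ (n+1))) atTop (𝓝 (lam⁻¹ * I)) := by
    have h1 := (hl.inv₀ hlam.ne').mul (s1 (fun n => G (δ n)) _ hGl)
    refine h1.congr' ?_
    filter_upwards [eventually_gt_atTop 0] with n hn
    have : (n:ℝ) ≠ 0 := by positivity
    field_simp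
  have hp : ∀ᶠ t in 𝓝[>] (0:ℝ), 0 < Real.log (δ (k t))⁻¹ := hktop.eventually (htop.eventually_gt_atTop 0)
  refine tendsto_of_tendsto_of_tendsto_of_le_of_le' (hlo.comp hktop) (hhi.comp hktop) ?_ ?_
  · filter_upwards [hsmall (δ 0) (hδ 0), hp] with t h1 h2
    obtain ⟨h3, h4⟩ := hk t h1.1 h1.2
    have h5 : Real.log (δ (k t))⁻¹ ≤ Real.log t⁻¹ := by
      rw [Real.log_inv, Real.log_inv]; exact neg_le_neg (Real.log_le_log h1.1 h4.le)
    have h6 : Real.log t⁻¹ ≤ Real.log (δ (k t + 1))⁻¹ := by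
      rw [Real.log_inv, Real.log_inv]; exact neg_le_neg (Real.log_le_log (hδ _) h3)
    have h7 := hG _ _ h1.1 h4.le
    have h8 := hG0 _ h1.1
    simp only [Function.comp]
    exact mul_le_mul (inv_anti₀ (h2.trans_le h5) h6) h7 (hG0 _ (hδ _)) (inv_nonneg.2 (h2.trans_le h5).le)
  · filter_upwards [hsmall (δ 0) (hδ 0), hp] with t h1 h2
    obtain ⟨h3, h4⟩ := hk t h1.1 h1.2
    have h5 : Real.log (δ (k t))⁻¹ ≤ Real.log t⁻¹ := by
      rw [Real.log_inv, Real.log_inv]; exact neg_le_neg (Real.log_le_log h1.1 h4.le)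
    have h7 := hG _ _ (hδ _) h3
    have h8 := hG0 _ h1.1
    simp only [Function.comp]
    exact mul_le_mul (inv_anti₀ h2 h5) h7 h8 (inv_nonneg.2 h2.le)

lemma log_int {N : ℕ} (ν : Measure (ℕ → Fin N)) [IsProbabilityMeasure ν] (p : Fin N → ℝ≥0∞)
    (hν : ∀ (n : ℕ) (u : Fin n → Fin N), ν {w : ℕ → Fin N | ∀ i : Fin n, w i = u i} = ∏ i, p (u i))
    (h : (ℕ → Fin N) → ℝ) (hm : Measurable h) (h0 : ∀ w, 0 ≤ h w) (H : ℝ) (hH : ∀ w, h w ≤ H)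
    (q : ℝ) (hq : 0 < q) (hq1 : q ≤ 1) (hs : ∀ w, q * h (shf w) ≤ h w)
    (u : ℕ → Fin N) (m : ℕ) (c : ℝ) (hc : 0 < c) (hcu : ∀ w ∈ cyl u m, c ≤ h w) (hpos : ν (cyl u m) ≠ 0) :
    (∀ᵐ w ∂ν, 0 < h w) ∧ Integrable (fun w => Real.log (h w)) ν := by
  have hmp := (shf_mp ν p hν).iterate m
  have hsm : ∀ w, q ^ m * h (shf^[m] w) ≤ h w := by
    clear hcu hpos hmp
    induction m with
    | zero => intro w; simp
    | succ m ih =>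
      intro w
      rw [Function.iterate_succ_apply, pow_succ']
      have h1 := ih (shf w)
      have h2 := hs w
      nlinarith
  have hqm : 0 < q ^ m := by positivity
  have hqm1 : q ^ m ≤ 1 := pow_le_one₀ hq.le hq1
  let Φ : ℕ → (ℕ → Fin N) → ℝ := fun n w => - Real.log (max (min (h w) 1) (Real.exp (-n)))
  have harg : ∀ n w, Real.exp (-(n:ℝ)) ≤ max (min (h w) 1) (Real.exp (-n)) := fun n w => le_max_right _ _
  have harg0 : ∀ (n:ℕ) w, 0 < max (min (h w) 1) (Real.exp (-n)) := fun n w => (Real.exp_pos _).trans_le (harg n w)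
  have harg1 : ∀ (n:ℕ) w, max (min (h w) 1) (Real.exp (-n)) ≤ 1 := fun n w => max_le (min_le_right _ _) (Real.exp_le_one_iff.2 (by simp))
  have hΦm : ∀ n, Measurable (Φ n) := fun n => (((hm.min measurable_const).max measurable_const).log).neg
  have hΦ0 : ∀ n w, 0 ≤ Φ n w := fun n w => by
    have := Real.log_nonpos (harg0 n w).le (harg1 n w)
    simp only [Φ]; linarith
  have hΦn : ∀ n w, Φ n w ≤ n := fun n w => by
    have := Real.log_le_log (Real.exp_pos _) (harg n w)
    rw [Real.log_exp] at this
    simp only [Φ]; linarith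
  have hΦi : ∀ n, Integrable (Φ n) ν := fun n => Integrable.of_bound (hΦm n).aestronglyMeasurable n (Eventually.of_forall fun w => by
    rw [Real.norm_eq_abs, abs_of_nonneg (hΦ0 n w)]; exact hΦn n w)
  set A := - Real.log (q ^ m) with hA
  have hA0 : 0 ≤ A := by
    have := Real.log_nonpos hqm.le hqm1
    linarith
  set c' := - Real.log (min c 1) with hc'
  have hmc : 0 < min c 1 := lt_min hc one_pos
  have hc0 : 0 ≤ c' := by
    have := Real.log_nonpos hmc.le (min_le_right c 1)
    linarith
  have hΦs : ∀ n w, Φ n w ≤ A + Φ n (shf^[m] w) := by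
    intro n w
    have : q ^ m * max (min (h (shf^[m] w)) 1) (Real.exp (-n)) ≤ max (min (h w) 1) (Real.exp (-n)) := by
      rw [mul_max_of_nonneg _ _ hqm.le, mul_min_of_nonneg _ _ hqm.le]
      refine max_le_max (min_le_min (hsm w) (by linarith)) ?_
      exact mul_le_of_le_one_left (Real.exp_pos _).le hqm1
    have := Real.log_le_log (mul_pos hqm (harg0 n _)) this
    rw [Real.log_mul hqm.ne' (harg0 n _).ne'] at this
    simp only [Φ]; linarith
  have hΦc : ∀ n, ∀ w ∈ cyl u m, Φ n w ≤ c' := by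
    intro n w hw
    have : min c 1 ≤ max (min (h w) 1) (Real.exp (-n)) := (min_le_min_right _ (hcu w hw)).trans (le_max_left _ _)
    have := Real.log_le_log hmc this
    simp only [Φ]; linarith
  set P := ν.real (cyl u m) with hP
  have hP0 : 0 < P := ENNReal.toReal_pos hpos (measure_ne_top _ _)
  have hP1 : P ≤ 1 := measureReal_le_one
  set K := (c' + A) / P
  have hI : ∀ n, ∫ w, Φ n w ∂ν ≤ K := by
    intro n
    have hcm := cyl_meas u m
    have hi2 : Integrable (fun w => Φ n (shf^[m] w)) ν := hmp.integrable_comp_of_integrable (hΦi n)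
    have e1 : ∫ w, Φ n (shf^[m] w) ∂ν = ∫ w, Φ n w ∂ν := by
      conv_rhs => rw [← hmp.map_eq]
      rw [integral_map hmp.measurable.aemeasurable (hΦm n).aestronglyMeasurable]
    have e2 : ∫ w in cyl u m, Φ n (shf^[m] w) ∂ν = P * ∫ w, Φ n w ∂ν := by
      rw [← integral_map (f := Φ n) hmp.measurable.aemeasurable (hΦm n).aestronglyMeasurable, cyl_indep ν p hν, integral_smul_measure]
      rfl
    have e3 := integral_add_compl hcm hi2
    have e4 := integral_add_compl hcm (hΦi n)
    have e5 : ∫ w in cyl u m, Φ n w ∂ν ≤ c' := by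
      have := setIntegral_mono_on (hΦi n).integrableOn (integrable_const c').integrableOn hcm (hΦc n)
      rw [setIntegral_const, smul_eq_mul] at this
      refine this.trans ?_
      exact mul_le_of_le_one_left hc0 hP1
    have e6 : ∫ w in (cyl u m)ᶜ, Φ n w ∂ν ≤ A + ∫ w in (cyl u m)ᶜ, Φ n (shf^[m] w) ∂ν := by
      have := setIntegral_mono_on (hΦi n).integrableOn ((integrable_const A).add hi2).integrableOn hcm.compl (fun w _ => hΦs n w)
      rw [integral_add' (integrable_const A).integrableOn hi2.integrableOn, setIntegral_const, smul_eq_mul] at this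
      refine this.trans ?_
      have : ν.real (cyl u m)ᶜ * A ≤ A := mul_le_of_le_one_left hA0 measureReal_le_one
      linarith
    rw [le_div_iff₀ hP0]
    linarith
  have hL : ∫⁻ w, liminf (fun n => ENNReal.ofReal (Φ n w)) atTop ∂ν ≤ ENNReal.ofReal K := by
    refine (lintegral_liminf_le fun n => (hΦm n).ennreal_ofReal).trans ?_
    refine liminf_le_of_frequently_le' (Frequently.of_forall fun n => ?_)
    rw [← ofReal_integral_eq_lintegral_ofReal (hΦi n) (Eventually.of_forall (hΦ0 n))]
    exact ENNReal.ofReal_le_ofReal (hI n)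
  have hLfin : ∫⁻ w, liminf (fun n => ENNReal.ofReal (Φ n w)) atTop ∂ν ≠ ⊤ := ne_top_of_le_ne_top ENNReal.ofReal_ne_top hL
  have hLm : Measurable (fun w => liminf (fun n => ENNReal.ofReal (Φ n w)) atTop) := Measurable.liminf fun n => (hΦm n).ennreal_ofReal
  have hpos' : ∀ᵐ w ∂ν, 0 < h w := by
    filter_upwards [ae_lt_top hLm hLfin] with w hw
    by_contra hc
    have hz : h w = 0 := le_antisymm (not_lt.1 hc) (h0 w)
    have : ∀ n, Φ n w = n := by
      intro n
      simp only [Φ, hz]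
      rw [min_eq_left zero_le_one, max_eq_right (Real.exp_pos _).le, Real.log_exp]; ring
    simp only [this, ENNReal.ofReal_natCast] at hw
    rw [ENNReal.tendsto_nat_nhds_top.liminf_eq] at hw
    exact lt_irrefl _ hw
  refine ⟨hpos', ?_⟩
  have hmi : Integrable (fun w => - Real.log (min (h w) 1)) ν := by
    refine ⟨((hm.min measurable_const).log.neg).aestronglyMeasurable, ?_⟩
    rw [hasFiniteIntegral_iff_norm]
    refine lt_of_le_of_lt ?_ (lt_top_iff_ne_top.2 hLfin)
    refine lintegral_mono_ae ?_
    filter_upwards [hpos'] with w hw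
    have hmw : 0 < min (h w) 1 := lt_min hw one_pos
    have : Tendsto (fun n => ENNReal.ofReal (Φ n w)) atTop (𝓝 (ENNReal.ofReal ‖- Real.log (min (h w) 1)‖)) := by
      refine tendsto_const_nhds.congr' ?_
      have : Tendsto (fun n : ℕ => Real.exp (-(n:ℝ))) atTop (𝓝 0) :=
        Real.tendsto_exp_atBot.comp (tendsto_neg_atTop_atBot.comp tendsto_natCast_atTop_atTop)
      filter_upwards [this.eventually (gt_mem_nhds hmw)] with n hn
      simp only [Φ]
      rw [max_eq_left hn.le, Real.norm_eq_abs, abs_of_nonneg]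
      linarith [Real.log_nonpos hmw.le (min_le_right (h w) 1)]
    rw [this.liminf_eq]
  have hd : Integrable (fun w => - Real.log (min (h w) 1) + |Real.log (max H 1)|) ν := hmi.add (integrable_const _)
  refine hd.mono' hm.log.aestronglyMeasurable ?_
  filter_upwards [hpos'] with w hw
  have hmw : 0 < min (h w) 1 := lt_min hw one_pos
  have a1 := Real.log_le_log hmw (min_le_left (h w) 1)
  have a2 := Real.log_le_log hw ((hH w).trans (le_max_left H 1))
  have a3 := Real.log_nonpos hmw.le (min_le_right (h w) 1)
  have a4 := le_abs_self (Real.log (max H 1))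
  have a5 := abs_nonneg (Real.log (max H 1))
  rw [Real.norm_eq_abs, abs_le]
  constructor <;> linarith


def dn {N : ℕ} (r : Fin N → ℝ) (h : (ℕ → Fin N) → ℝ) : ℕ → (ℕ → Fin N) → ℝ
  | 0 => h
  | n + 1 => fun w => r (w 0) * dn r h n (shf w)

lemma abs_main {N : ℕ} (ν : Measure (ℕ → Fin N)) [IsProbabilityMeasure ν] (p : Fin N → ℝ≥0∞)
    (hν : ∀ (n : ℕ) (u : Fin n → Fin N), ν {w : ℕ → Fin N | ∀ i : Fin n, w i = u i} = ∏ i, p (u i))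
    (r : Fin N → ℝ) (hr : ∀ i, r i ∈ Set.Ioo (0 : ℝ) 1) (D : ℝ) (hp : ∀ i, p i = ENNReal.ofReal (r i ^ D))
    (h : (ℕ → Fin N) → ℝ) (hm : Measurable h) (h0 : ∀ᵐ w ∂ν, 0 < h w) (hi : Integrable (fun w => Real.log (h w)) ν)
    (hs : ∀ w, r (w 0) * h (shf w) ≤ h w) (h00 : ∀ w, 0 ≤ h w)
    (K : (ℕ → Fin N) → ℝ → ℝ) (k : (ℕ → Fin N) × ℝ → ℝ) (hk : Measurable k)
    (hkK : ∀ w ε, 0 < ε → k (w, ε) = K w ε)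
    (C : ℝ) (hC : 0 ≤ C) (hK : ∀ w ε, 0 < ε → 0 ≤ K w ε ∧ K w ε ≤ C * ε⁻¹)
    (hsc : ∀ w ε, 0 < ε → ε ≤ r (w 0) * h (shf w) → K w ε = (r (w 0))⁻¹ * K (shf w) (ε / r (w 0))) :
    ∀ᵐ w ∂ν, Tendsto (fun δ : ℝ => (Real.log δ⁻¹)⁻¹ * ∫ ε in Set.Ioc δ (h w), K w ε) (𝓝[>] 0)
      (𝓝 ((∑ j, r j ^ D * Real.log (r j)⁻¹)⁻¹ *
        ∫ v, (∫ ε in Set.Ioc (r (v 0) * h (shf v)) (h v), K v ε) ∂ν)) := by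
  have hmp := shf_mp ν p hν
  have herg := shf_ergodic ν p hν
  -- integrability of K
  have hKi : ∀ w δ T, 0 < δ → IntegrableOn (K w) (Ioc δ T) := by
    intro w δ T hδ
    have hkm : Measurable (fun ε => k (w, ε)) := hk.comp (measurable_const.prodMk measurable_id)
    have h1 : IntegrableOn (fun ε => k (w, ε)) (Ioc δ T) := by
      refine Measure.integrableOn_of_bounded (M := C * δ⁻¹) (by simp) hkm.aestronglyMeasurable ?_
      refine (ae_restrict_iff' measurableSet_Ioc).2 (Eventually.of_forall fun ε hε => ?_)
      have hε0 : 0 < ε := hδ.trans hε.1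
      rw [hkK w ε hε0, Real.norm_eq_abs, abs_of_nonneg (hK w ε hε0).1]
      refine (hK w ε hε0).2.trans ?_
      have := inv_anti₀ hδ hε.1.le
      gcongr
    exact h1.congr_fun (fun ε hε => hkK w ε (hδ.trans hε.1)) measurableSet_Ioc
  have hG0 : ∀ w δ T, 0 < δ → 0 ≤ ∫ ε in Ioc δ T, K w ε := by
    intro w δ T hδ
    exact setIntegral_nonneg measurableSet_Ioc fun ε hε => (hK w ε (hδ.trans hε.1)).1
  have hGanti : ∀ w T s t, 0 < s → s ≤ t → ∫ ε in Ioc t T, K w ε ≤ ∫ ε in Ioc s T, K w ε := by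
    intro w T s t hs hst
    refine setIntegral_mono_set (hKi w s T hs) ?_ ?_
    · exact (ae_restrict_iff' measurableSet_Ioc).2 (Eventually.of_forall fun ε hε => (hK w ε (hs.trans hε.1)).1)
    · exact (Ioc_subset_Ioc_left hst).eventuallyLE
  have hGb : ∀ w δ T, 0 < δ → δ ≤ T → ∫ ε in Ioc δ T, K w ε ≤ C * (Real.log T - Real.log δ) := by
    intro w δ T hδ hT
    have hT0 := hδ.trans_le hT
    have hii : IntegrableOn (fun ε : ℝ => C * ε⁻¹) (Ioc δ T) := by
      have : IntervalIntegrable (fun ε : ℝ => C * ε⁻¹) volume δ T := by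
        refine (intervalIntegral.intervalIntegrable_inv (f := fun x => x) ?_ continuousOn_id).const_mul C
        intro x hx
        rw [uIcc_of_le hT] at hx
        exact (hδ.trans_le hx.1).ne'
      exact (intervalIntegrable_iff_integrableOn_Ioc_of_le hT).1 this
    have h1 := setIntegral_mono_on (hKi w δ T hδ) hii measurableSet_Ioc fun ε hε => (hK w ε (hδ.trans hε.1)).2
    refine h1.trans ?_
    rw [← intervalIntegral.integral_of_le hT, intervalIntegral.integral_const_mul, integral_inv_of_pos hδ hT0,
      Real.log_div hT0.ne' hδ.ne']
  set g : (ℕ → Fin N) → ℝ := fun v => ∫ ε in Set.Ioc (r (v 0) * h (shf v)) (h v), K v ε with hg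
  have hr0 : ∀ i, 0 < r i := fun i => (hr i).1
  have hmr : Measurable (fun w : ℕ → Fin N => r (w 0)) := (measurable_of_countable r).comp (measurable_pi_apply 0)
  have hml : Measurable (fun w : ℕ → Fin N => Real.log (r (w 0))⁻¹) := hmr.inv.log
  have hgm : Measurable g := by
    let s : Set ((ℕ → Fin N) × ℝ) := {q | r (q.1 0) * h (shf q.1) < q.2} ∩ {q | q.2 ≤ h q.1}
    have hsm : MeasurableSet s := by
      refine (measurableSet_lt ?_ measurable_snd).inter (measurableSet_le measurable_snd (hm.comp measurable_fst))
      exact (hmr.comp measurable_fst).mul (hm.comp (shf_meas.comp measurable_fst))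
    have h1 : StronglyMeasurable (s.indicator k) := (hk.indicator hsm).stronglyMeasurable
    have h2 := (h1.integral_prod_right' (ν := (volume : Measure ℝ))).measurable
    convert h2 using 2 with v
    rw [hg]
    simp only
    rw [← integral_indicator measurableSet_Ioc]
    refine integral_congr_ae (Eventually.of_forall fun ε => ?_)
    show (Ioc (r (v 0) * h (shf v)) (h v)).indicator (K v) ε = s.indicator k (v, ε)
    by_cases hε : ε ∈ Ioc (r (v 0) * h (shf v)) (h v)
    · have hin : (v, ε) ∈ s := hε
      rw [indicator_of_mem hε, indicator_of_mem hin, hkK]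
      exact lt_of_le_of_lt (mul_nonneg (hr0 _).le (h00 _)) hε.1
    · have hin : (v, ε) ∉ s := hε
      rw [indicator_of_notMem hε, indicator_of_notMem hin]
  set ψ : (ℕ → Fin N) → ℝ := fun w => Real.log (h w) - Real.log (h (shf w)) + Real.log (r (w 0))⁻¹ with hψ
  have hlm : Measurable (fun w => Real.log (h w)) := hm.log
  have hi2 : Integrable (fun w => Real.log (h (shf w))) ν := hmp.integrable_comp_of_integrable hi
  have hli : Integrable (fun w : ℕ → Fin N => Real.log (r (w 0))⁻¹) ν := by
    have : Integrable (fun i : Fin N => Real.log (r i)⁻¹) (ν.map fun w => w 0) := Integrable.of_finite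
    exact this.comp_measurable (measurable_pi_apply 0)
  have hψm : Measurable ψ := (hlm.sub (hlm.comp shf_meas)).add hml
  have hψi : Integrable ψ ν := (hi.sub hi2).add hli
  set lam := ∑ j, r j ^ D * Real.log (r j)⁻¹ with hlam
  have hψint : ∫ w, ψ w ∂ν = lam := by
    have e1 : ∫ w, ψ w ∂ν = (∫ w, Real.log (h w) ∂ν - ∫ w, Real.log (h (shf w)) ∂ν) + ∫ w, Real.log (r (w 0))⁻¹ ∂ν := by
      rw [← integral_sub hi hi2]
      exact integral_add (hi.sub hi2) hli
    have e2 : ∫ w, Real.log (h (shf w)) ∂ν = ∫ w, Real.log (h w) ∂ν := by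
      conv_rhs => rw [← hmp.map_eq]
      rw [integral_map shf_meas.aemeasurable hlm.aestronglyMeasurable]
    have e3 : ∫ w, Real.log (r (w 0))⁻¹ ∂ν = lam := by
      rw [← integral_map (f := fun i => Real.log (r i)⁻¹) (φ := fun w : ℕ → Fin N => w 0) (measurable_pi_apply 0).aemeasurable
        (measurable_of_countable _).aestronglyMeasurable, integral_fintype Integrable.of_finite]
      refine Finset.sum_congr rfl fun i _ => ?_
      rw [smul_eq_mul]
      congr 1
      rw [measureReal_def, Measure.map_apply (measurable_pi_apply 0) (measurableSet_singleton i)]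
      have := hν 1 (fun _ => i)
      simp only [Fin.forall_fin_one, Finset.prod_const, Finset.card_univ, Fintype.card_fin, pow_one] at this
      have e4 : (fun w : ℕ → Fin N => w 0) ⁻¹' {i} = {w | w ((0 : Fin 1) : ℕ) = i} := rfl
      rw [e4, this, hp, ENNReal.toReal_ofReal (Real.rpow_nonneg (hr0 i).le _)]
    rw [e1, e2, e3]; ring
  have hlampos : 0 < lam := by
    have : Nonempty (Fin N) := by
      obtain ⟨w⟩ := nonempty_of_isProbabilityMeasure ν
      exact ⟨w 0⟩
    refine Finset.sum_pos (fun i _ => ?_) Finset.univ_nonempty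
    exact mul_pos (Real.rpow_pos_of_pos (hr0 i) _) (Real.log_pos ((one_lt_inv₀ (hr0 i)).2 (hr i).2))
  have hall : ∀ᵐ w ∂ν, ∀ n, 0 < h (shf^[n] w) := by
    rw [ae_all_iff]
    intro n
    exact (hmp.iterate n).quasiMeasurePreserving.ae h0
  have hψeq : ∀ w, 0 < h w → 0 < h (shf w) → Real.log (h w) - Real.log (r (w 0) * h (shf w)) = ψ w := by
    intro w h1 h2
    simp only [ψ]
    rw [Real.log_mul (hr0 _).ne' h2.ne', Real.log_inv]; ring
  have hgi : Integrable g ν := by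
    refine (hψi.const_mul C).mono' hgm.aestronglyMeasurable ?_
    filter_upwards [hall] with w hw
    have h1 := hw 0
    have h2 := hw 1
    simp only [Function.iterate_zero, id, Function.iterate_one] at h1 h2
    have h3 : 0 < r (w 0) * h (shf w) := mul_pos (hr0 _) h2
    rw [Real.norm_eq_abs, abs_of_nonneg (hG0 w _ _ h3), ← hψeq w h1 h2]
    exact hGb w _ _ h3 (hs w)
  have hshift : ∀ w δ, 0 < δ → δ ≤ h (shf w) →
      ∫ ε in Ioc (r (w 0) * δ) (h w), K w ε = g w + ∫ ε in Ioc δ (h (shf w)), K (shf w) ε := by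
    intro w δ hδ hδh
    have hrw := hr0 (w 0)
    have h1 : 0 < r (w 0) * δ := mul_pos hrw hδ
    have h2 : r (w 0) * δ ≤ r (w 0) * h (shf w) := by gcongr
    rw [← Ioc_union_Ioc_eq_Ioc h2 (hs w), setIntegral_union (Ioc_disjoint_Ioc_of_le le_rfl) measurableSet_Ioc
      (hKi w _ _ h1) (hKi w _ _ (h1.trans_le h2)), add_comm]
    congr 1
    have e1 : ∫ ε in Ioc (r (w 0) * δ) (r (w 0) * h (shf w)), K w ε =
        ∫ ε in Ioc (r (w 0) * δ) (r (w 0) * h (shf w)), (r (w 0))⁻¹ * K (shf w) (ε / r (w 0)) :=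
      setIntegral_congr_fun measurableSet_Ioc fun ε hε => hsc w ε (h1.trans hε.1) hε.2
    rw [e1, ← intervalIntegral.integral_of_le h2, ← intervalIntegral.integral_of_le hδh,
      intervalIntegral.integral_const_mul, intervalIntegral.integral_comp_div _ hrw.ne', smul_eq_mul,
      mul_div_cancel_left₀ _ hrw.ne', mul_div_cancel_left₀ _ hrw.ne', inv_mul_cancel_left₀ hrw.ne']
  have hdn : ∀ n w, (∀ k, 0 < h (shf^[k] w)) → 0 < dn r h n w ∧ dn r h n w ≤ h w ∧ dn r h (n+1) w ≤ dn r h n w ∧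
      Real.log (dn r h n w)⁻¹ = - Real.log (h w) + birkhoffSum shf ψ n w ∧
      ∫ ε in Ioc (dn r h n w) (h w), K w ε = birkhoffSum shf g n w := by
    intro n
    induction n with
    | zero =>
      intro w hw
      refine ⟨hw 0, le_rfl, hs w, ?_, ?_⟩
      · simp [dn]
      · simp [dn]
    | succ n ih =>
      intro w hw
      have hw' : ∀ k, 0 < h (shf^[k] (shf w)) := fun k => by
        rw [← Function.iterate_succ_apply]; exact hw _
      obtain ⟨i1, i2, i3, i4, i5⟩ := ih (shf w) hw'
      have hrw := hr0 (w 0)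
      have ha : dn r h (n+1) w = r (w 0) * dn r h n (shf w) := rfl
      have hb : dn r h (n+1+1) w = r (w 0) * dn r h (n+1) (shf w) := rfl
      refine ⟨ha ▸ mul_pos hrw i1, ?_, ?_, ?_, ?_⟩
      · rw [ha]; exact (mul_le_mul_of_nonneg_left i2 hrw.le).trans (hs w)
      · rw [ha, hb]; exact mul_le_mul_of_nonneg_left i3 hrw.le
      · rw [birkhoffSum_succ', ha, mul_inv, Real.log_mul (inv_ne_zero hrw.ne') (inv_ne_zero i1.ne'), i4]
        simp only [ψ]; ring
      · rw [birkhoffSum_succ', ha, hshift w _ i1 i2, i5]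
  filter_upwards [hall, birkhoff_ae herg g hgm hgi, birkhoff_ae herg ψ hψm hψi] with w hw hgl hψl
  rw [hψint] at hψl
  refine sandwich (fun n => dn r h n w) (fun n => (hdn n w hw).1) (antitone_nat_of_succ_le fun n => (hdn n w hw).2.2.1)
    lam _ hlampos ?_ (fun δ => ∫ ε in Ioc δ (h w), K w ε) (fun s t => hGanti w _ s t) (fun s hs => hG0 w s _ hs) ?_
  · have : Tendsto (fun n : ℕ => (- Real.log (h w)) / (n:ℝ) + birkhoffSum shf ψ n w / n) atTop (𝓝 (0 + lam)) :=
      (tendsto_const_div_atTop_nhds_zero_nat _).add hψl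
    rw [zero_add] at this
    refine this.congr fun n => ?_
    rw [(hdn n w hw).2.2.2.1, add_div]
  · refine hgl.congr fun n => ?_
    rw [(hdn n w hw).2.2.2.2]


lemma pi_close {d N : ℕ}
    (S : Fin N → EuclideanSpace ℝ (Fin d) → EuclideanSpace ℝ (Fin d))
    (r : Fin N → ℝ) (hr : ∀ i, r i ∈ Set.Ioo (0 : ℝ) 1)
    (hS : ∀ i x y, dist (S i x) (S i y) = r i * dist x y)
    (F : Set (EuclideanSpace ℝ (Fin d))) (hF_cpt : IsCompact F)
    (π : (ℕ → Fin N) → EuclideanSpace ℝ (Fin d)) (hπ_mem : ∀ w, π w ∈ F)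
    (hπ : ∀ w, π w = S (w 0) (π (shf w))) (q : ℝ) (hq : ∀ i, r i ≤ q) (n : ℕ) :
    ∀ v w : ℕ → Fin N, v ∈ cyl w n → dist (π v) (π w) ≤ diam F * q ^ n := by
  induction n with
  | zero => intro v w _; simpa using dist_le_diam_of_mem hF_cpt.isBounded (hπ_mem v) (hπ_mem w)
  | succ n ih =>
    intro v w h
    have h1 := ih (shf v) (shf w) fun i hi => h (i+1) (by omega)
    have h2 := h 0 (by omega)
    rw [hπ v, hπ w, h2, hS, pow_succ]
    have h3 := hq (w 0)
    have h4 := (hr (w 0)).1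
    calc r (w 0) * dist (π (shf v)) (π (shf w)) ≤ q * (diam F * q ^ n) := by gcongr; exact h4.le.trans h3
      _ = _ := by ring

lemma pi_word {d N : ℕ}
    (S : Fin N → EuclideanSpace ℝ (Fin d) → EuclideanSpace ℝ (Fin d))
    (r : Fin N → ℝ) (hr : ∀ i, r i ∈ Set.Ioo (0 : ℝ) 1)
    (hS : ∀ i x y, dist (S i x) (S i y) = r i * dist x y)
    (F : Set (EuclideanSpace ℝ (Fin d))) (hF_cpt : IsCompact F) (hF_self : F = ⋃ i, S i '' F)
    (π : (ℕ → Fin N) → EuclideanSpace ℝ (Fin d)) (hπ_mem : ∀ w, π w ∈ F) (w0 : ℕ → Fin N)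
    (hπ : ∀ w, π w = S (w 0) (π (shf w))) (q : ℝ) (hq : ∀ i, r i ≤ q) (n : ℕ) :
    ∀ x ∈ F, ∃ u : ℕ → Fin N, ∀ v ∈ cyl u n, dist (π v) x ≤ diam F * q ^ n := by
  induction n with
  | zero => intro x hx; exact ⟨w0, fun v _ => by simpa using dist_le_diam_of_mem hF_cpt.isBounded (hπ_mem v) hx⟩
  | succ n ih =>
    intro x hx
    rw [hF_self, mem_iUnion] at hx
    obtain ⟨i, y, hy, rfl⟩ := hx
    obtain ⟨u, hu⟩ := ih y hy
    refine ⟨fun k => if k = 0 then i else u (k - 1), fun v hv => ?_⟩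
    have h1 := hu (shf v) fun j hj => by simpa [shf] using hv (j+1) (by omega)
    have h2 : v 0 = i := by simpa using hv 0 (by omega)
    rw [hπ v, h2, hS, pow_succ]
    have h3 := hq i
    have h4 := (hr i).1
    calc r i * dist (π (shf v)) y ≤ q * (diam F * q ^ n) := by gcongr; exact h4.le.trans h3
      _ = _ := by ring

theorem statement4 (d N : ℕ) (hd : 1 ≤ d) (hN : 2 ≤ N)
    (S : Fin N → EuclideanSpace ℝ (Fin d) → EuclideanSpace ℝ (Fin d))
    (r : Fin N → ℝ) (hr : ∀ i, r i ∈ Set.Ioo (0 : ℝ) 1)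
    (hS : ∀ i x y, dist (S i x) (S i y) = r i * dist x y)
    (F : Set (EuclideanSpace ℝ (Fin d)))
    (hF_ne : F.Nonempty) (hF_cpt : IsCompact F)
    (hF_self : F = ⋃ i, S i '' F)
    (D : ℝ) (hD : 0 < D) (hD_dim : ∑ i, r i ^ D = 1)
    (J : Set (EuclideanSpace ℝ (Fin d))) (hJ_cpt : IsCompact J)
    (hJ_reg : J = closure (interior J))
    (hJ_sub : ∀ i, S i '' J ⊆ J)
    (hJ_disj : ∀ i j, i ≠ j → Disjoint (S i '' interior J) (S j '' interior J))
    (hSOSC : (F ∩ interior J).Nonempty)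
    (ν : Measure (ℕ → Fin N)) [IsProbabilityMeasure ν]
    (hν_cyl : ∀ (n : ℕ) (u : Fin n → Fin N),
      ν {w : ℕ → Fin N | ∀ i : Fin n, w i = u i} = ∏ i, ENNReal.ofReal (r (u i) ^ D))
    (π : (ℕ → Fin N) → EuclideanSpace ℝ (Fin d))
    (hπ_mem : ∀ w, π w ∈ F)
    (hπ : ∀ w, π w = S (w 0) (π (fun n => w (n + 1))))
    (a ε₀ : ℝ) (ha : 1 < a) (hε₀ : 0 < ε₀)
    (b : ℝ) (hb : b = max (2 * a) (Metric.diam J / ε₀)) :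
    ∀ᵐ w ∂ν,
      Tendsto (fun δ : ℝ => (Real.log δ⁻¹)⁻¹ *
          ∫ ε in Set.Ioc δ (Metric.infDist (π w) Jᶜ / b),
            ε ^ (-((d : ℝ) - 1)) *
              (μH[(d:ℝ) - 1] (frontier (Metric.cthickening ε F) ∩ Metric.closedBall (π w) (a * ε))).toReal
              * ε⁻¹)
        (𝓝[>] 0)
        (𝓝 ((∑ j, r j ^ D * Real.log (r j)⁻¹)⁻¹ *
          ∫ v, (∫ ε in Set.Ioc (Metric.infDist (π v) ((S (v 0) '' J))ᶜ / b)
                  (Metric.infDist (π v) Jᶜ / b),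
              ε ^ (-((d : ℝ) - 1)) *
                (μH[(d:ℝ) - 1] (frontier (Metric.cthickening ε F)
                  ∩ Metric.closedBall (π v) (a * ε))).toReal * ε⁻¹) ∂ν)) := by
  have hπ' : ∀ w, π w = S (w 0) (π (shf w)) := hπ
  have hr0 : ∀ i, 0 < r i := fun i => (hr i).1
  have hb2 : 2 * a ≤ b := hb ▸ le_max_left _ _
  have hb0 : 0 < b := by linarith
  have : NeZero d := ⟨by omega⟩
  have : Nonempty (Fin N) := ⟨⟨0, by omega⟩⟩
  have hJn : J.Nonempty := hSOSC.mono (inter_subset_right.trans interior_subset)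
  have hFJ : F ⊆ J := F_sub_J S r hr hS F hF_ne hF_cpt hF_self J hJ_cpt hJn hJ_sub
  have hJc : (Jᶜ).Nonempty := by
    rw [nonempty_compl]
    exact hJ_cpt.ne_univ
  obtain ⟨imax, hmax⟩ := Finite.exists_max r
  obtain ⟨imin, hmin⟩ := Finite.exists_min r
  have hcompl : ∀ i, (S i '' J)ᶜ = S i '' Jᶜ := fun i => by
    obtain ⟨e, he⟩ := sim_homeo d (S i) (r i) (hr0 i) (hS i)
    rw [← he, image_compl_eq e.bijective]
  have hinf : ∀ v, infDist (π v) (S (v 0) '' J)ᶜ = r (v 0) * infDist (π (shf v)) Jᶜ := fun v => by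
    rw [hcompl, hπ' v, sim_infDist (S (v 0)) (r (v 0)) (hr0 _) (hS _)]
  set h : (ℕ → Fin N) → ℝ := fun w => infDist (π w) Jᶜ / b with hh
  have hinf2 : ∀ v, infDist (π v) (S (v 0) '' J)ᶜ / b = r (v 0) * h (shf v) := fun v => by
    rw [hinf, hh]; ring
  have hs : ∀ w, r (w 0) * h (shf w) ≤ h w := fun w => by
    rw [← hinf2, hh]
    simp only
    gcongr
    exact infDist_le_infDist_of_subset (compl_subset_compl.2 (hJ_sub _)) hJc
  have h00 : ∀ w, 0 ≤ h w := fun w => div_nonneg infDist_nonneg hb0.le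
  have hqt : Tendsto (fun n : ℕ => diam F * r imax ^ n) atTop (𝓝 0) := by
    have := (tendsto_pow_atTop_nhds_zero_of_lt_one (hr0 imax).le (hr imax).2).const_mul (diam F)
    rwa [mul_zero] at this
  have hcont : Continuous π := by
    rw [continuous_iff_continuousAt]
    intro w
    refine Metric.tendsto_nhds.2 fun ε hε => ?_
    obtain ⟨n, hn⟩ := (hqt.eventually (gt_mem_nhds hε)).exists
    have ho : IsOpen (cyl w n) := by
      have : cyl w n = Set.pi (Iio n) fun i => {w i} := by
        ext v; simp [cyl, Set.mem_pi]
      rw [this]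
      exact isOpen_set_pi (finite_Iio n) fun _ _ => isOpen_discrete _
    filter_upwards [ho.mem_nhds (show w ∈ cyl w n from fun _ _ => rfl)] with v hv
    exact (pi_close S r hr hS F hF_cpt π hπ_mem hπ' (r imax) hmax n v w hv).trans_lt hn
  have hπm : Measurable π := hcont.measurable
  have hhm : Measurable h := ((continuous_infDist_pt _).measurable.comp hπm).div_const b
  obtain ⟨H, hH⟩ : ∃ H, ∀ w, h w ≤ H := by
    obtain ⟨x, hx, hm⟩ := hF_cpt.exists_isMaxOn hF_ne (continuous_infDist_pt Jᶜ).continuousOn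
    refine ⟨infDist x Jᶜ / b, fun w => ?_⟩
    have : infDist (π w) Jᶜ ≤ infDist x Jᶜ := hm (hπ_mem w)
    simp only [hh]
    gcongr
  obtain ⟨x, hxF, hxJ⟩ := hSOSC
  have hx0 : 0 < infDist x Jᶜ := by
    have : x ∉ closure Jᶜ := by rw [closure_compl]; exact not_not.2 hxJ
    exact (infDist_pos_iff_notMem_closure hJc).1 this
  obtain ⟨m, hm⟩ := (hqt.eventually (gt_mem_nhds (half_pos hx0))).exists
  obtain ⟨u, hu⟩ := pi_word S r hr hS F hF_cpt hF_self π hπ_mem (fun _ => imax) hπ' (r imax) hmax m x hxF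
  have hp : ∀ i, (fun i => ENNReal.ofReal (r i ^ D)) i = ENNReal.ofReal (r i ^ D) := fun _ => rfl
  have hpos : ν (cyl u m) ≠ 0 := by
    rw [cyl_val ν (fun i => ENNReal.ofReal (r i ^ D)) hν_cyl]
    refine Finset.prod_ne_zero_iff.2 fun i _ => ?_
    exact (ENNReal.ofReal_pos.2 (Real.rpow_pos_of_pos (hr0 _) _)).ne'
  obtain ⟨h0, hli⟩ := log_int ν (fun i => ENNReal.ofReal (r i ^ D)) hν_cyl h hhm h00 H hH (r imin) (hr0 _) (hr imin).2.le
    (fun w => (mul_le_mul_of_nonneg_right (hmin (w 0)) (h00 _)).trans (hs w)) u m (infDist x Jᶜ / 2 / b)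
    (by positivity) (fun w hw => by
      have h1 := hu w hw
      have h2 := infDist_le_infDist_add_dist (s := Jᶜ) (x := x) (y := π w)
      rw [dist_comm] at h2
      simp only [hh]
      gcongr
      linarith) hpos
  obtain ⟨k0, hk0, hk1⟩ := kf_meas d hd a F hF_ne hF_cpt
  obtain ⟨C, hC, hKb⟩ := kf_bound d hd a F hF_ne hF_cpt
  have main := abs_main ν (fun i => ENNReal.ofReal (r i ^ D)) hν_cyl r hr D hp h hhm h0 hli hs h00
    (fun w ε => kf d F a ε (π w)) (fun q => k0 (q.2, π q.1))
    (hk0.comp (measurable_snd.prodMk (hπm.comp measurable_fst))) (fun w ε hε => hk1 ε (π w) hε) C hC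
    (fun w ε hε => hKb ε (π w) hε) (fun w ε hε hle => by
      rw [hπ' w]
      refine kf_scale hd S r hr hS F hF_cpt hF_self J hFJ hJ_reg hJ_disj a b ha hb2 (w 0) (π (shf w)) ε hε ?_
      rw [← hπ' w]
      rw [← hinf2, le_div_iff₀ hb0] at hle
      linarith)
  simp only [← hinf2] at main
  exact main
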